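/- For every integer ω, the standard curve δ_ω has the minimal number of crossings among all stable planar curves with Whitney winding number ω, and this minimal number equals | |ω| − 1 |. -/

import Mathlib

open Set
open scoped ENNReal

noncomputable section

namespace CurvePaper


/-- The determinant of two vectors in the plane `ℝ² ≅ ℂ`. -/
def det2 (u v : ℂ) : ℝ := u.re * v.im - u.im * v.re

/-- The determinant of three vectors in `ℝ³`. -/
def det3 (a b c : EuclideanSpace ℝ (Fin 3)) : ℝ :=
  a 0 * (b 1 * c 2 - b 2 * c 1) - a 1 * (b 0 * c 2 - b 2 * c 0) + a 2 * (b 0 * c 1 - b 1 * c 0)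

/-- The homomorphism `φ : 𝕏 → ℤ`, `X_{a,b} ↦ a - b`, on the free abelian group `𝕏`
with basis `{X_{a,b} : a b ∈ ℤ}`. -/
def phi : FreeAbelianGroup (ℤ × ℤ) →+ ℤ :=
  FreeAbelianGroup.lift fun p : ℤ × ℤ => p.1 - p.2

/-! ### Planar curves -/

/-- A closed planar curve: a smooth immersion of the circle `ℝ/ℤ` into the plane. -/
structure PlanarCurve : Type where
  toFun : ℝ → ℂ
  periodic : Function.Periodic toFun 1
  smooth : ContDiff ℝ (⊤ : ℕ∞) toFun
  immersion : ∀ t : ℝ, deriv toFun t ≠ 0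

namespace PlanarCurve

/-- The number of parameters in one period mapping to a given point. -/
def multF (f : ℝ → ℂ) (p : ℂ) : ℕ := Set.ncard {t ∈ Set.Ico (0:ℝ) 1 | f t = p}

/-- All self-intersections of `f` at the point `p` are transverse. -/
def TransverseF (f : ℝ → ℂ) (p : ℂ) : Prop :=
  ∀ s ∈ Set.Ico (0:ℝ) 1, ∀ t ∈ Set.Ico (0:ℝ) 1, s ≠ t → f s = p → f t = p →
    det2 (deriv f s) (deriv f t) ≠ 0

/-- The set of self-intersection points of a parametrized curve. -/
def crossingSetF (f : ℝ → ℂ) : Set ℂ := {p : ℂ | 2 ≤ multF f p}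

/-- A parametrized curve is stable if its only self-intersections are finitely many
transverse double points. -/
def StableF (f : ℝ → ℂ) : Prop :=
  (crossingSetF f).Finite ∧ ∀ p : ℂ, multF f p ≤ 2 ∧ (multF f p = 2 → TransverseF f p)

/-- A planar curve is stable if its only self-intersections are transverse double points. -/
def Stable (c : PlanarCurve) : Prop := StableF c.toFun

/-- The number of crossings (self-intersection points) of a planar curve. -/
def crossings (c : PlanarCurve) : ℕ := (crossingSetF c.toFun).ncard

/-- `c` has Whitney winding number `ω`: the degree of the normalized derivative map
`S¹ → S¹`, expressed via a continuous lift of its angle. -/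
def HasWhitney (c : PlanarCurve) (ω : ℤ) : Prop :=
  ∃ θ : ℝ → ℝ, Continuous θ ∧
    (∀ t : ℝ, deriv c.toFun t = (‖deriv c.toFun t‖ : ℂ) * Complex.exp ((θ t : ℂ) * Complex.I)) ∧
    θ 1 - θ 0 = 2 * Real.pi * (ω : ℝ)

/-- `H` is a regular homotopy between parametrized curves `f` and `g`:
a continuously varying family of immersed closed curves. -/
def IsRegHomotopy (f g : ℝ → ℂ) (H : ℝ → ℝ → ℂ) : Prop :=
  (Continuous fun q : ℝ × ℝ => H q.1 q.2) ∧
  (Continuous fun q : ℝ × ℝ => deriv (H q.1) q.2) ∧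
  (∀ s : ℝ, Function.Periodic (H s) 1) ∧
  (∀ s : ℝ, ContDiff ℝ (⊤ : ℕ∞) (H s)) ∧
  (∀ s t : ℝ, deriv (H s) t ≠ 0) ∧
  H 0 = f ∧ H 1 = g

/-- Two planar curves are regularly homotopic. -/
def RegularlyHomotopic (c c' : PlanarCurve) : Prop :=
  ∃ H, IsRegHomotopy c.toFun c'.toFun H

/-- Two planar curves are homotopic through *stable* immersed curves. -/
def StablyHomotopic (c c' : PlanarCurve) : Prop :=
  ∃ H, IsRegHomotopy c.toFun c'.toFun H ∧ ∀ s ∈ Set.Icc (0:ℝ) 1, StableF (H s)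

/-- A point of a curve which is either a regular point or a transverse double point. -/
def StablePointF (f : ℝ → ℂ) (p : ℂ) : Prop :=
  multF f p ≤ 1 ∨ (multF f p = 2 ∧ TransverseF f p)

/-- A curve exhibiting a single `J`-type singularity (a first-order tangency of two
strands), all other points being stable. -/
def JSingF (f : ℝ → ℂ) : Prop :=
  ∃ p : ℂ, multF f p = 2 ∧
    (∀ s ∈ Set.Ico (0:ℝ) 1, ∀ t ∈ Set.Ico (0:ℝ) 1, s ≠ t → f s = p → f t = p →
      ∃ r : ℝ, r ≠ 0 ∧ deriv f t = (r : ℂ) * deriv f s ∧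
        det2 (deriv f s) (iteratedDeriv 2 f s) * ‖deriv f t‖ ^ 3 ≠
          (if 0 < r then 1 else -1) * det2 (deriv f t) (iteratedDeriv 2 f t) * ‖deriv f s‖ ^ 3) ∧
    (∀ q : ℂ, q ≠ p → StablePointF f q) ∧ (crossingSetF f).Finite

/-- A curve exhibiting a single `S`-type singularity (three strands meeting at one point,
pairwise transversally), all other points being stable. -/
def SSingF (f : ℝ → ℂ) : Prop :=
  ∃ p : ℂ, multF f p = 3 ∧ TransverseF f p ∧
    (∀ q : ℂ, q ≠ p → StablePointF f q) ∧ (crossingSetF f).Finite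

/-- A `J` move: a regular homotopy between stable curves passing through exactly one
singular moment, of `J`-type. -/
def JMove (c c' : PlanarCurve) : Prop :=
  c.Stable ∧ c'.Stable ∧ ∃ H, IsRegHomotopy c.toFun c'.toFun H ∧
    ∃ s₀ ∈ Set.Ioo (0:ℝ) 1, (∀ s ∈ Set.Icc (0:ℝ) 1, s ≠ s₀ → StableF (H s)) ∧ JSingF (H s₀)

/-- An `S` move: a regular homotopy between stable curves passing through exactly one
singular moment, of `S`-type. -/
def SMove (c c' : PlanarCurve) : Prop :=
  c.Stable ∧ c'.Stable ∧ ∃ H, IsRegHomotopy c.toFun c'.toFun H ∧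
    ∃ s₀ ∈ Set.Ioo (0:ℝ) 1, (∀ s ∈ Set.Icc (0:ℝ) 1, s ≠ s₀ → StableF (H s)) ∧ SSingF (H s₀)

/-- A basic move is a `J` move or an `S` move. -/
def BasicMove (c c' : PlanarCurve) : Prop := JMove c c' ∨ SMove c c'

/-- An increasing `J` move adds two crossings. -/
def IncreasingJMove (c c' : PlanarCurve) : Prop :=
  JMove c c' ∧ c'.crossings = c.crossings + 2

/-- A decreasing `J` move removes two crossings. -/
def DecreasingJMove (c c' : PlanarCurve) : Prop :=
  JMove c c' ∧ c.crossings = c'.crossings + 2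

/-- A `Z` move: the composite of an increasing `J` move, an `S` move and a decreasing
`J` move (sliding an empty 1-gon past a transverse strand). -/
def ZMove (c c' : PlanarCurve) : Prop :=
  ∃ c₁ c₂, IncreasingJMove c c₁ ∧ SMove c₁ c₂ ∧ DecreasingJMove c₂ c'

/-- A sequence of `k` basic moves leading from `c` to `c'` (allowing an initial
deformation through stable curves). -/
def ChainFromTo (c c' : PlanarCurve) (seq : ℕ → PlanarCurve) (k : ℕ) : Prop :=
  StablyHomotopic c (seq 0) ∧ seq k = c' ∧ ∀ i < k, BasicMove (seq i) (seq (i+1))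

/-- The distance between two curves: the minimal number of basic moves needed to pass
from `c` to `c'` (`⊤` if they are not regularly homotopic). -/
def dist (c c' : PlanarCurve) : ℕ∞ :=
  sInf {m : ℕ∞ | ∃ k : ℕ, m = (k : ℕ∞) ∧ ∃ seq : ℕ → PlanarCurve, ChainFromTo c c' seq k}

/-- The diameter of a set of curves. -/
def diam (A : Set PlanarCurve) : ℕ∞ := ⨆ c ∈ A, ⨆ c' ∈ A, dist c c'

/-- `B^ω_n`: the set of all stable planar curves with Whitney number `ω` and at most
`n` crossings. -/
def B (ω : ℤ) (n : ℕ) : Set PlanarCurve :=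
  {c : PlanarCurve | c.Stable ∧ c.HasWhitney ω ∧ c.crossings ≤ n}

/-- A step of the algorithm: an `S` move, a decreasing `J` move, or a `Z` move whose two
intermediate curves have at most `N` crossings; `w` is the number of basic moves used. -/
def AlgStep (N : ℕ) (c c' : PlanarCurve) (w : ℕ) : Prop :=
  (SMove c c' ∧ w = 1) ∨ (DecreasingJMove c c' ∧ w = 1) ∨
  ((∃ c₁ c₂, IncreasingJMove c c₁ ∧ SMove c₁ c₂ ∧ DecreasingJMove c₂ c' ∧
      c₁.crossings ≤ N ∧ c₂.crossings ≤ N) ∧ w = 3)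

/-! #### The invariant `f^X` -/

/-- The set of parameter pairs (in one period) realizing the double points of a curve. -/
def crossingPairsF (f : ℝ → ℂ) : Set (ℝ × ℝ) :=
  {q : ℝ × ℝ | q.1 ∈ Set.Ico (0:ℝ) 1 ∧ q.2 ∈ Set.Ico (0:ℝ) 1 ∧ q.1 < q.2 ∧ f q.1 = f q.2}

/-- The sign `i(v) ∈ {1,-1}` of a double point visited first at time `s` and then at
time `t`: `1` iff the tangents, in the order visited, form a positive basis. -/
def crossSign (f : ℝ → ℂ) (s t : ℝ) : ℤ :=
  if 0 < det2 (deriv f s) (deriv f t) then 1 else -1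

/-- The index `i(e)` of the subarc `e` of `f` on the parameter interval `(α, β)`:
the sum of the signs of the double points of `e`. -/
def arcIndex (f : ℝ → ℂ) (α β : ℝ) : ℤ :=
  ∑ᶠ q ∈ {q : ℝ × ℝ | q.1 ∈ Set.Ioo α β ∧ q.2 ∈ Set.Ioo α β ∧ q.1 < q.2 ∧ f q.1 = f q.2},
    crossSign f q.1 q.2

/-- The order one invariant `f^X(c) = ∑_v X_{a(v),b(v)} ∈ 𝕏`, where for each double
point `v` the two arcs of `c` based at `v` are ordered by the orientation of the tangents. -/
def fX (c : PlanarCurve) : FreeAbelianGroup (ℤ × ℤ) :=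
  ∑ᶠ q ∈ crossingPairsF c.toFun,
    if 0 < det2 (deriv c.toFun q.1) (deriv c.toFun q.2) then
      FreeAbelianGroup.of (arcIndex c.toFun q.1 q.2, arcIndex c.toFun q.2 (q.1 + 1))
    else
      FreeAbelianGroup.of (arcIndex c.toFun q.2 (q.1 + 1), arcIndex c.toFun q.1 q.2)

/-- The integer valued invariant `g = φ ∘ f^X`. -/
def g (c : PlanarCurve) : ℤ := phi (fX c)

/-! #### The standard curves `δ_ω` -/

/-- An explicit stable curve with winding number `m ≥ 1` and `m - 1` (inward) loops. -/
def deltaFunPos (m : ℕ) : ℝ → ℂ := fun t =>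
  Complex.exp (((2 * Real.pi * (m : ℝ) * t : ℝ) : ℂ) * Complex.I) +
    ((2 * (m : ℝ) / 3 : ℝ) : ℂ) * Complex.exp (((2 * Real.pi * t : ℝ) : ℂ) * Complex.I)

/-- The standard planar curve `δ_ω` with Whitney number `ω` and `||ω|-1|` crossings:
for `ω = 0` a figure eight, and for `ω ≠ 0` a round circle with `|ω| - 1` small loops. -/
def deltaFun (ω : ℤ) : ℝ → ℂ :=
  if ω = 0 then
    fun t => ((Real.sin (2 * Real.pi * t) : ℝ) : ℂ) + ((Real.sin (4 * Real.pi * t) : ℝ) : ℂ) * Complex.I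
  else if 0 < ω then deltaFunPos ω.toNat
  else fun t => (starRingEnd ℂ) (deltaFunPos (-ω).toNat t)

end PlanarCurve


/-! ### Spherical curves -/


/-- A closed spherical curve: a smooth immersion of the circle `ℝ/ℤ` into the unit
sphere `S² ⊆ ℝ³`. -/
structure SphericalCurve : Type where
  toFun : ℝ → EuclideanSpace ℝ (Fin 3)
  norm_one : ∀ t : ℝ, ‖toFun t‖ = 1
  periodic : Function.Periodic toFun 1
  smooth : ContDiff ℝ (⊤ : ℕ∞) toFun
  immersion : ∀ t : ℝ, deriv toFun t ≠ 0

namespace SphericalCurve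

def multF (f : ℝ → EuclideanSpace ℝ (Fin 3)) (p : EuclideanSpace ℝ (Fin 3)) : ℕ :=
  Set.ncard {t ∈ Set.Ico (0:ℝ) 1 | f t = p}

/-- Transversality of the branches at `p`: tangent vectors at `p` are pairwise
independent, detected by the `3×3` determinant with the base point `p` (the outward
normal of the sphere, fixing its orientation). -/
def TransverseF (f : ℝ → EuclideanSpace ℝ (Fin 3)) (p : EuclideanSpace ℝ (Fin 3)) : Prop :=
  ∀ s ∈ Set.Ico (0:ℝ) 1, ∀ t ∈ Set.Ico (0:ℝ) 1, s ≠ t → f s = p → f t = p →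
    det3 p (deriv f s) (deriv f t) ≠ 0

def crossingSetF (f : ℝ → EuclideanSpace ℝ (Fin 3)) : Set (EuclideanSpace ℝ (Fin 3)) :=
  {p | 2 ≤ multF f p}

def StableF (f : ℝ → EuclideanSpace ℝ (Fin 3)) : Prop :=
  (crossingSetF f).Finite ∧ ∀ p, multF f p ≤ 2 ∧ (multF f p = 2 → TransverseF f p)

def Stable (c : SphericalCurve) : Prop := StableF c.toFun

def crossings (c : SphericalCurve) : ℕ := (crossingSetF c.toFun).ncard

/-- The curve as a map into the sphere as a subtype. -/
def pt (c : SphericalCurve) (t : ℝ) : Metric.sphere (0 : EuclideanSpace ℝ (Fin 3)) 1 :=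
  ⟨c.toFun t, mem_sphere_zero_iff_norm.mpr (c.norm_one t)⟩

/-- The planar curve obtained from `c` by deleting the point `v ∈ S²` not on `c`
(stereographic projection from `v`). -/
def proj (c : SphericalCurve) (v : Metric.sphere (0 : EuclideanSpace ℝ (Fin 3)) 1) :
    ℝ → EuclideanSpace ℝ (Fin 2) :=
  haveI : Fact (Module.finrank ℝ (EuclideanSpace ℝ (Fin 3)) = 2 + 1) := ⟨by simp⟩
  fun t => stereographic' 2 v (c.pt t)

/-- `c` has (spherical) Whitney number `ω ∈ ℤ/2`: the parity of the winding number of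
the planar curve obtained by deleting from `S²` a point in the complement of `c`. -/
def HasWhitney (c : SphericalCurve) (ω : ZMod 2) : Prop :=
  ∃ v : Metric.sphere (0 : EuclideanSpace ℝ (Fin 3)) 1,
    (∀ t : ℝ, c.toFun t ≠ (v : EuclideanSpace ℝ (Fin 3))) ∧
    ∃ (m : ℤ) (θ : ℝ → ℝ), Continuous θ ∧
      (∀ t : ℝ, deriv (c.proj v) t =
        ‖deriv (c.proj v) t‖ •
          ((WithLp.equiv 2 (Fin 2 → ℝ)).symm ![Real.cos (θ t), Real.sin (θ t)])) ∧
      θ 1 - θ 0 = 2 * Real.pi * (m : ℝ) ∧ ω = (m : ZMod 2)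

def IsRegHomotopy (f g : ℝ → EuclideanSpace ℝ (Fin 3))
    (H : ℝ → ℝ → EuclideanSpace ℝ (Fin 3)) : Prop :=
  (Continuous fun q : ℝ × ℝ => H q.1 q.2) ∧
  (Continuous fun q : ℝ × ℝ => deriv (H q.1) q.2) ∧
  (∀ s t : ℝ, ‖H s t‖ = 1) ∧
  (∀ s : ℝ, Function.Periodic (H s) 1) ∧
  (∀ s : ℝ, ContDiff ℝ (⊤ : ℕ∞) (H s)) ∧
  (∀ s t : ℝ, deriv (H s) t ≠ 0) ∧
  H 0 = f ∧ H 1 = g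

def RegularlyHomotopic (c c' : SphericalCurve) : Prop :=
  ∃ H, IsRegHomotopy c.toFun c'.toFun H

def StablyHomotopic (c c' : SphericalCurve) : Prop :=
  ∃ H, IsRegHomotopy c.toFun c'.toFun H ∧ ∀ s ∈ Set.Icc (0:ℝ) 1, StableF (H s)

def StablePointF (f : ℝ → EuclideanSpace ℝ (Fin 3)) (p : EuclideanSpace ℝ (Fin 3)) : Prop :=
  multF f p ≤ 1 ∨ (multF f p = 2 ∧ TransverseF f p)

def JSingF (f : ℝ → EuclideanSpace ℝ (Fin 3)) : Prop :=
  ∃ p : EuclideanSpace ℝ (Fin 3), multF f p = 2 ∧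
    (∀ s ∈ Set.Ico (0:ℝ) 1, ∀ t ∈ Set.Ico (0:ℝ) 1, s ≠ t → f s = p → f t = p →
      ∃ r : ℝ, r ≠ 0 ∧ deriv f t = r • deriv f s ∧
        det3 p (deriv f s) (iteratedDeriv 2 f s) * ‖deriv f t‖ ^ 3 ≠
          (if 0 < r then 1 else -1) * det3 p (deriv f t) (iteratedDeriv 2 f t) * ‖deriv f s‖ ^ 3) ∧
    (∀ q, q ≠ p → StablePointF f q) ∧ (crossingSetF f).Finite

def SSingF (f : ℝ → EuclideanSpace ℝ (Fin 3)) : Prop :=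
  ∃ p : EuclideanSpace ℝ (Fin 3), multF f p = 3 ∧ TransverseF f p ∧
    (∀ q, q ≠ p → StablePointF f q) ∧ (crossingSetF f).Finite

def JMove (c c' : SphericalCurve) : Prop :=
  c.Stable ∧ c'.Stable ∧ ∃ H, IsRegHomotopy c.toFun c'.toFun H ∧
    ∃ s₀ ∈ Set.Ioo (0:ℝ) 1, (∀ s ∈ Set.Icc (0:ℝ) 1, s ≠ s₀ → StableF (H s)) ∧ JSingF (H s₀)

def SMove (c c' : SphericalCurve) : Prop :=
  c.Stable ∧ c'.Stable ∧ ∃ H, IsRegHomotopy c.toFun c'.toFun H ∧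
    ∃ s₀ ∈ Set.Ioo (0:ℝ) 1, (∀ s ∈ Set.Icc (0:ℝ) 1, s ≠ s₀ → StableF (H s)) ∧ SSingF (H s₀)

def BasicMove (c c' : SphericalCurve) : Prop := JMove c c' ∨ SMove c c'

def IncreasingJMove (c c' : SphericalCurve) : Prop :=
  JMove c c' ∧ c'.crossings = c.crossings + 2

def DecreasingJMove (c c' : SphericalCurve) : Prop :=
  JMove c c' ∧ c.crossings = c'.crossings + 2

def ZMove (c c' : SphericalCurve) : Prop :=
  ∃ c₁ c₂, IncreasingJMove c c₁ ∧ SMove c₁ c₂ ∧ DecreasingJMove c₂ c'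

def ChainFromTo (c c' : SphericalCurve) (seq : ℕ → SphericalCurve) (k : ℕ) : Prop :=
  StablyHomotopic c (seq 0) ∧ seq k = c' ∧ ∀ i < k, BasicMove (seq i) (seq (i+1))

def dist (c c' : SphericalCurve) : ℕ∞ :=
  sInf {m : ℕ∞ | ∃ k : ℕ, m = (k : ℕ∞) ∧ ∃ seq : ℕ → SphericalCurve, ChainFromTo c c' seq k}

def diam (A : Set SphericalCurve) : ℕ∞ := ⨆ c ∈ A, ⨆ c' ∈ A, dist c c'

def B (ω : ZMod 2) (n : ℕ) : Set SphericalCurve :=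
  {c : SphericalCurve | c.Stable ∧ c.HasWhitney ω ∧ c.crossings ≤ n}

def AlgStep (N : ℕ) (c c' : SphericalCurve) (w : ℕ) : Prop :=
  (SMove c c' ∧ w = 1) ∨ (DecreasingJMove c c' ∧ w = 1) ∨
  ((∃ c₁ c₂, IncreasingJMove c c₁ ∧ SMove c₁ c₂ ∧ DecreasingJMove c₂ c' ∧
      c₁.crossings ≤ N ∧ c₂.crossings ≤ N) ∧ w = 3)

/-! #### The invariant `f^X` for spherical curves -/

def crossingPairsF (f : ℝ → EuclideanSpace ℝ (Fin 3)) : Set (ℝ × ℝ) :=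
  {q : ℝ × ℝ | q.1 ∈ Set.Ico (0:ℝ) 1 ∧ q.2 ∈ Set.Ico (0:ℝ) 1 ∧ q.1 < q.2 ∧ f q.1 = f q.2}

def crossSign (f : ℝ → EuclideanSpace ℝ (Fin 3)) (s t : ℝ) : ℤ :=
  if 0 < det3 (f s) (deriv f s) (deriv f t) then 1 else -1

def arcIndex (f : ℝ → EuclideanSpace ℝ (Fin 3)) (α β : ℝ) : ℤ :=
  ∑ᶠ q ∈ {q : ℝ × ℝ | q.1 ∈ Set.Ioo α β ∧ q.2 ∈ Set.Ioo α β ∧ q.1 < q.2 ∧ f q.1 = f q.2},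
    crossSign f q.1 q.2

def fX (c : SphericalCurve) : FreeAbelianGroup (ℤ × ℤ) :=
  ∑ᶠ q ∈ crossingPairsF c.toFun,
    if 0 < det3 (c.toFun q.1) (deriv c.toFun q.1) (deriv c.toFun q.2) then
      FreeAbelianGroup.of (arcIndex c.toFun q.1 q.2, arcIndex c.toFun q.2 (q.1 + 1))
    else
      FreeAbelianGroup.of (arcIndex c.toFun q.2 (q.1 + 1), arcIndex c.toFun q.1 q.2)

def g (c : SphericalCurve) : ℤ := phi (fX c)

/-- Inverse stereographic projection `ℂ → S²` from the north pole. -/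
def stereoInv (z : ℂ) : EuclideanSpace ℝ (Fin 3) :=
  (WithLp.equiv 2 (Fin 3 → ℝ)).symm
    ![2 * z.re / (Complex.normSq z + 1), 2 * z.im / (Complex.normSq z + 1),
      (Complex.normSq z - 1) / (Complex.normSq z + 1)]

/-- The standard spherical curves `δ_0` (one crossing) and `δ_1` (embedded):
the images in `S²` of the standard planar curves `δ_0`, `δ_1`. -/
def deltaFun (ω : ZMod 2) : ℝ → EuclideanSpace ℝ (Fin 3) :=
  fun t => stereoInv (PlanarCurve.deltaFun (if ω = 0 then 0 else 1) t)

end SphericalCurve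


/-- The determinant of two vectors in `ℝ × ℝ`. -/
def det2P (u v : ℝ × ℝ) : ℝ := u.1 * v.2 - u.2 * v.1

/-- The closed region bounded by a subset of the plane: the set together with all the
bounded connected components of its complement. -/
def closedRegion (S : Set ℂ) : Set ℂ :=
  S ∪ {p : ℂ | p ∉ S ∧ Bornology.IsBounded (connectedComponentIn Sᶜ p)}

/-!
For the lower bound, let a stable curve `f` start at a lowest point, which it visits only once, and
suppose that it passes this point from left to right. For each `s ∈ [0, 1]` consider the directions
of the chords from `f s` to `f t`, where `t` runs from `s` (tangent direction) to `1`. As long as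
`f s` is not visited again before time `1`, these directions form a path avoiding the origin. The
number of turns of this path, measured against lifts along `s` of its two end directions, is locally
constant in `s`. As in Hopf's proof of the Umlaufsatz, it is `0` for `s = 0` and `ω - 1` for
`s = 1`, since the chords to and from a lowest point stay in a half plane. At a parameter `s` whose
point is visited again the path passes through the origin once, along a line, so the number of turns
changes by at most one. Hence `|ω - 1|` is at most the number of crossings. Reflecting the curve if
the lowest point is passed from right to left gives `|ω + 1|` instead, and both are at least
`||ω| - 1|`.

For `m > 1`, the curve `δ_m` is the restriction of `z ↦ z ^ m + (2 * m / 3) * z` to the unit circle.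
It takes equal values at `q * exp (i d)` and `q * exp (-i d)` iff
`q ^ (m - 1) * sin (m d) = -(2 * m / 3) * sin d`; comparing absolute values determines `|d|`, and
then `q ^ (m - 1) = -1`, which has `m - 1` solutions.
-/

open Filter
open scoped Topology Real ComplexConjugate

/-! ### Counting jumps -/

theorem eq_of_eventually_eq_nhdsWithin_Icc {N : ℝ → ℤ} {a b : ℝ} (hab : a ≤ b)
    (hconst : ∀ s ∈ Icc a b, ∀ᶠ x in 𝓝[Icc a b] s, N x = N s) : N a = N b := by
  have hcont : ContinuousOn N (Icc a b) := fun s hs ↦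
    continuousWithinAt_const.congr_of_eventuallyEq (hconst s hs) rfl
  exact isPreconnected_Icc.constant hcont (left_mem_Icc.2 hab) (right_mem_Icc.2 hab)

theorem abs_sub_le_card_of_jump_le_one {N : ℝ → ℤ} {S : Finset ℝ} {a b : ℝ} (hab : a ≤ b)
    (hS : ∀ s ∈ S, s ∈ Ioo a b)
    (hconst : ∀ s ∈ Icc a b, s ∉ S → ∀ᶠ x in 𝓝[Icc a b] s, N x = N s)
    (hjump : ∀ s ∈ S, ∀ᶠ x in 𝓝[<] s, ∀ᶠ y in 𝓝[>] s, |N x - N y| ≤ 1) :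
    |N a - N b| ≤ S.card := by
  induction S using Finset.induction_on_max generalizing b with
  | empty => simp [eq_of_eventually_eq_nhdsWithin_Icc hab fun s hs ↦ hconst s hs (by simp)]
  | insert s S hmax ih =>
    obtain ⟨has, hsb⟩ := hS s (Finset.mem_insert_self s S)
    have hgap : ∀ᶠ x in 𝓝[<] s, a < x ∧ x < s ∧ ∀ r ∈ S, r < x :=
      ((eventually_gt_nhds has).filter_mono nhdsWithin_le_nhds).and <|
        eventually_mem_nhdsWithin.and <| (Finset.eventually_all S).2 fun r hr ↦
          (eventually_gt_nhds (hmax r hr)).filter_mono nhdsWithin_le_nhds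
    obtain ⟨x, hxjump, hax, hxs, hSx⟩ :=
      ((hjump s (Finset.mem_insert_self s S)).and hgap).exists
    obtain ⟨y, hxy, hsy, hyb⟩ := (hxjump.and
      (eventually_mem_nhdsWithin.and (nhdsWithin_le_nhds (eventually_lt_nhds hsb)))).exists
    have hxb : x ≤ b := (hxs.trans hsb).le
    have hright : N y = N b := by
      refine eq_of_eventually_eq_nhdsWithin_Icc hyb.le fun r hr ↦
        (hconst r ⟨(has.trans (hsy.trans_le hr.1)).le, hr.2⟩ fun hrS ↦ ?_).filter_mono
          (nhdsWithin_mono r (Icc_subset_Icc_left (has.trans hsy).le))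
      rcases Finset.mem_insert.1 hrS with rfl | hrS
      · exact hsy.not_ge hr.1
      · exact (hmax r hrS).not_ge ((le_of_lt hsy).trans hr.1)
    have hleft : |N a - N x| ≤ S.card := by
      refine ih hax.le (fun r hr ↦ ⟨(hS r (Finset.mem_insert_of_mem hr)).1, hSx r hr⟩)
        (fun r hr hrS ↦ (hconst r ⟨hr.1, hr.2.trans hxb⟩ ?_).filter_mono
          (nhdsWithin_mono r (Icc_subset_Icc_right hxb)))
        (fun r hr ↦ hjump r (Finset.mem_insert_of_mem hr))
      simpa [hrS] using (hr.2.trans_lt hxs).ne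
    rw [Finset.card_insert_of_notMem fun h ↦ (hmax s h).false, ← hright, Nat.cast_succ]
    exact (abs_sub_le _ (N x) _).trans (add_le_add hleft hxy)

/-! ### Angles and their continuous lifts -/

/-- `α` is an angle of the complex number `z`, in the form used by `PlanarCurve.HasWhitney`;
every real number is an angle of `0`. -/
def IsAngle (z : ℂ) (α : ℝ) : Prop := z = (‖z‖ : ℂ) * Complex.exp ((α : ℂ) * Complex.I)

theorem isAngle_arg (z : ℂ) : IsAngle z z.arg := (Complex.norm_mul_exp_arg_mul_I z).symm

theorem isAngle_ofReal_of_nonneg {r : ℝ} (hr : 0 ≤ r) : IsAngle (r : ℂ) 0 := by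
  simp [IsAngle, abs_of_nonneg hr]

theorem isAngle_exp (α : ℝ) : IsAngle (Complex.exp (α * Complex.I)) α := by
  rw [IsAngle, Complex.norm_exp_ofReal_mul_I, Complex.ofReal_one, one_mul]

namespace IsAngle

variable {z w : ℂ} {α β : ℝ}

theorem mul (hz : IsAngle z α) (hw : IsAngle w β) : IsAngle (z * w) (α + β) := by
  unfold IsAngle at *
  rw [norm_mul, Complex.ofReal_mul, Complex.ofReal_add, add_mul, Complex.exp_add,
    mul_mul_mul_comm, ← hz, ← hw]

theorem map_conj (hz : IsAngle z α) : IsAngle (conj z) (-α) := by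
  unfold IsAngle at *
  rw [RCLike.norm_conj, Complex.ofReal_neg, neg_mul, ← mul_neg, ← Complex.conj_I,
    ← Complex.conj_ofReal α, ← map_mul, Complex.exp_conj, ← Complex.conj_ofReal ‖z‖, ← map_mul,
    ← hz]

theorem neg (hz : IsAngle z α) : IsAngle (-z) (α + π) := by
  have hneg : IsAngle (-1) π := by simp [IsAngle]
  simpa using hz.mul hneg

theorem add_two_pi_mul_int (hz : IsAngle z α) (n : ℤ) : IsAngle z (α + 2 * π * n) := by
  have hone : IsAngle 1 (2 * π * n) := by
    simp only [IsAngle, norm_one, Complex.ofReal_one, one_mul]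
    exact (Complex.exp_eq_one_iff.2 ⟨n, by push_cast; ring⟩).symm
  simpa using hz.mul hone

theorem exists_eq_add_two_pi_mul_int (hz : z ≠ 0) (hα : IsAngle z α) (hβ : IsAngle z β) :
    ∃ n : ℤ, α = β + 2 * π * n := by
  have hexp : Complex.exp (α * Complex.I) = Complex.exp (β * Complex.I) :=
    mul_left_cancel₀ (Complex.ofReal_ne_zero.2 (norm_ne_zero_iff.2 hz)) (hα.symm.trans hβ)
  obtain ⟨n, hn⟩ := Complex.exp_eq_exp_iff_exists_int.1 hexp
  have him := congrArg Complex.im hn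
  refine ⟨n, ?_⟩
  simp only [Complex.add_im, Complex.mul_im, Complex.ofReal_re, Complex.ofReal_im, Complex.I_re,
    Complex.I_im, Complex.intCast_re, Complex.intCast_im, Complex.mul_re, Complex.re_ofNat,
    Complex.im_ofNat] at him
  linarith

theorem re_eq (hz : IsAngle z α) : z.re = ‖z‖ * Real.cos α := by
  conv_lhs => rw [hz, Complex.re_ofReal_mul, Complex.exp_ofReal_mul_I_re]

theorem re_mul_conj (hz : IsAngle z α) (hw : IsAngle w β) :
    (z * conj w).re = ‖z‖ * ‖w‖ * Real.cos (α - β) := by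
  simpa [sub_eq_add_neg] using (hz.mul hw.map_conj).re_eq

theorem cos_sub_pos (hz : IsAngle z α) (hw : IsAngle w β) (hzw : 0 < (z * conj w).re) :
    0 < Real.cos (α - β) :=
  pos_of_mul_pos_right (hz.re_mul_conj hw ▸ hzw) (by positivity)

end IsAngle

theorem abs_lt_pi_div_two_of_cos_pos {x : ℝ} (hx : |x| ≤ π) (hcos : 0 < Real.cos x) :
    |x| < π / 2 := by
  by_contra! hcon
  rw [← Real.cos_abs] at hcos
  exact hcos.not_ge (Real.cos_nonpos_of_pi_div_two_le_of_le hcon (by linarith [Real.pi_pos]))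

theorem exists_isAngle_abs_sub_lt_pi_div_two {z v : ℂ} {α : ℝ} (hz : IsAngle z α)
    (hzv : 0 < (z * conj v).re) : ∃ β, IsAngle v β ∧ |α - β| < π / 2 := by
  set n : ℤ := round ((α - v.arg) / (2 * π))
  have hβ : IsAngle v (v.arg + 2 * π * n) := (isAngle_arg v).add_two_pi_mul_int n
  refine ⟨_, hβ, abs_lt_pi_div_two_of_cos_pos ?_ (hz.cos_sub_pos hβ hzv)⟩
  have hpi : 0 < 2 * π := by positivity
  calc |α - (v.arg + 2 * π * n)| = |(α - v.arg) / (2 * π) - n| * (2 * π) := by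
        rw [← abs_of_pos hpi, ← abs_mul, abs_of_pos hpi, sub_mul, div_mul_cancel₀ _ hpi.ne']
        ring_nf
    _ ≤ 1 / 2 * (2 * π) := by gcongr; exact abs_sub_round _
    _ = π := by ring

theorem re_mul_conj_pos_of_norm_sub_lt {z w : ℂ} (h : ‖z - w‖ < ‖w‖) : 0 < (z * conj w).re := by
  have hw : 0 < ‖w‖ := (norm_nonneg _).trans_lt h
  have hsplit : z * conj w = (z - w) * conj w + ((‖w‖ ^ 2 : ℝ) : ℂ) := by
    rw [sub_mul, Complex.mul_conj w, Complex.normSq_eq_norm_sq]; ring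
  have hbound : -(‖z - w‖ * ‖w‖) ≤ ((z - w) * conj w).re := by
    simpa using (abs_le.1 (Complex.abs_re_le_norm ((z - w) * conj w))).1
  rw [hsplit, Complex.add_re, Complex.ofReal_re]
  nlinarith

theorem continuousOn_arg_im_nonneg : ContinuousOn Complex.arg {z | 0 ≤ z.im ∧ z ≠ 0} := by
  have harg : ∀ z ∈ {z : ℂ | 0 ≤ z.im ∧ z ≠ 0}, z.arg = Real.arccos (z.re / ‖z‖) :=
    fun z hz ↦ Complex.arg_of_im_nonneg_of_ne_zero hz.1 hz.2
  refine ContinuousOn.congr (fun z hz ↦ ?_) harg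
  exact (Real.continuous_arccos.continuousAt.comp (Complex.continuous_re.continuousAt.div
    continuous_norm.continuousAt (norm_ne_zero_iff.2 hz.2))).continuousWithinAt

/-- `L` is a continuous choice on `s` of an angle for each value of `h`. -/
def IsAngleLiftOn (h : ℝ → ℂ) (L : ℝ → ℝ) (s : Set ℝ) : Prop :=
  ContinuousOn L s ∧ ∀ u ∈ s, IsAngle (h u) (L u)

theorem IsAngleLiftOn.mono {h : ℝ → ℂ} {L : ℝ → ℝ} {s t : Set ℝ} (hL : IsAngleLiftOn h L t)
    (hst : s ⊆ t) : IsAngleLiftOn h L s :=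
  ⟨hL.1.mono hst, fun u hu ↦ hL.2 u (hst hu)⟩

theorem isAngleLiftOn_arg {h : ℝ → ℂ} {s : Set ℝ} (hc : ContinuousOn h s)
    (hh : ∀ u ∈ s, 0 ≤ (h u).im ∧ h u ≠ 0) : IsAngleLiftOn h (fun u ↦ (h u).arg) s :=
  ⟨continuousOn_arg_im_nonneg.comp hc hh, fun u _ ↦ isAngle_arg (h u)⟩

theorem exists_isAngleLiftOn {h : ℝ → ℂ} (hc : ContinuousOn h (Icc 0 1))
    (hne : ∀ u ∈ Icc (0 : ℝ) 1, h u ≠ 0) {α : ℝ} (hα : IsAngle (h 0) α) :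
    ∃ L, IsAngleLiftOn h L (Icc 0 1) ∧ L 0 = α := by
  let γ : C(unitInterval, {z : ℂ // z ≠ 0}) :=
    ⟨fun u ↦ ⟨h u, hne u u.2⟩, (continuousOn_iff_continuous_domRestrict.1 hc).subtype_mk _⟩
  have hlog : Complex.exp ((Real.log ‖h 0‖ : ℂ) + α * Complex.I) = h 0 := by
    rw [Complex.exp_add, ← Complex.ofReal_exp,
      Real.exp_log (norm_pos_iff.2 (hne 0 (left_mem_Icc.2 zero_le_one)))]
    exact hα.symm
  obtain ⟨Γ, hΓ, hΓ0⟩ := Complex.isCoveringMap_exp.exists_path_lifts γ _ (Subtype.ext hlog.symm)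
  refine ⟨fun u ↦ (Γ (projIcc 0 1 zero_le_one u)).im,
    ⟨(Complex.continuous_im.comp (Γ.continuous.comp continuous_projIcc)).continuousOn,
      fun u hu ↦ ?_⟩, ?_⟩
  · have hexp : Complex.exp (Γ ⟨u, hu⟩) = h u := congrArg Subtype.val (congrFun hΓ ⟨u, hu⟩)
    simp only [projIcc_of_mem _ hu, IsAngle]
    rw [← hexp, Complex.norm_exp, Complex.ofReal_exp, ← Complex.exp_add, Complex.re_add_im]
  · simp [hΓ0]

theorem abs_lt_of_cos_ne_zero {E : ℝ → ℝ} {a b c : ℝ} (hab : a ≤ b)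
    (hE : ContinuousOn E (Icc a b)) (hcos : ∀ u ∈ Icc a b, Real.cos (E u) ≠ 0)
    (hc : Real.cos c = 0) (ha : |E a| < c) : |E b| < c := by
  by_contra! hcon
  obtain ⟨u, hu, heq⟩ := intermediate_value_Icc hab hE.abs ⟨ha.le, hcon⟩
  exact hcos u hu (by rw [← Real.cos_abs, ← hc]; exact congrArg Real.cos heq)

theorem abs_lt_of_subsingleton_cos_eq_zero {E : ℝ → ℝ} {a b : ℝ} (hab : a ≤ b)
    (hE : ContinuousOn E (Icc a b)) (hcos : {u ∈ Icc a b | Real.cos (E u) = 0}.Subsingleton)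
    (ha : |E a| < π / 2) : |E b| < 3 * π / 2 := by
  have hcos_three : Real.cos (3 * π / 2) = 0 :=
    Real.cos_eq_zero_iff.2 ⟨1, by push_cast; ring⟩
  by_contra! hcon
  obtain ⟨u, hu, hu'⟩ := intermediate_value_Icc hab hE.abs
    (show π / 2 ∈ Icc |E a| |E b| from ⟨ha.le, by linarith [Real.pi_pos]⟩)
  obtain ⟨v, hv, hv'⟩ := intermediate_value_Icc hab hE.abs
    (show 3 * π / 2 ∈ Icc |E a| |E b| from ⟨by linarith [Real.pi_pos], hcon⟩)
  have huv : u = v := hcos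
    ⟨hu, by rw [← Real.cos_abs, ← Real.cos_pi_div_two]; exact congrArg Real.cos hu'⟩
    ⟨hv, by rw [← Real.cos_abs, ← hcos_three]; exact congrArg Real.cos hv'⟩
  subst huv
  linarith [hu'.symm.trans hv', Real.pi_pos]

namespace IsAngleLiftOn

variable {h h₁ h₂ : ℝ → ℂ} {L L₁ L₂ : ℝ → ℝ} {a b : ℝ}

theorem abs_sub_lt_of_norm_sub_lt (hL₁ : IsAngleLiftOn h₁ L₁ (Icc a b))
    (hL₂ : IsAngleLiftOn h₂ L₂ (Icc a b)) (hab : a ≤ b)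
    (hclose : ∀ u ∈ Icc a b, ‖h₁ u - h₂ u‖ < ‖h₂ u‖) {c : ℝ} (hc : Real.cos c = 0)
    (ha : |L₁ a - L₂ a| < c) : |L₁ b - L₂ b| < c :=
  abs_lt_of_cos_ne_zero (E := fun u ↦ L₁ u - L₂ u) hab (hL₁.1.sub hL₂.1)
    (fun u hu ↦ ((hL₁.2 u hu).cos_sub_pos (hL₂.2 u hu)
      (re_mul_conj_pos_of_norm_sub_lt (hclose u hu))).ne') hc ha

theorem abs_sub_lt_of_subsingleton_re_eq_zero (hL : IsAngleLiftOn h L (Icc a b)) (hab : a ≤ b)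
    {v : ℂ} {β : ℝ} (hβ : IsAngle v β)
    (hzero : {u ∈ Icc a b | (h u * conj v).re = 0}.Subsingleton)
    (ha : |L a - β| < π / 2) : |L b - β| < 3 * π / 2 :=
  abs_lt_of_subsingleton_cos_eq_zero (E := fun u ↦ L u - β) hab (hL.1.sub continuousOn_const)
    (hzero.anti fun u hu ↦ ⟨hu.1, by rw [(hL.2 u hu.1).re_mul_conj hβ, hu.2, mul_zero]⟩) ha

theorem abs_sub_lt_of_window (hL₁ : IsAngleLiftOn h₁ L₁ (Icc a b))
    (hL₂ : IsAngleLiftOn h₂ L₂ (Icc a b)) (hab : a ≤ b) {v : ℂ}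
    (hpos₁ : 0 < (h₁ a * conj v).re) (hpos₂ : 0 < (h₂ a * conj v).re)
    (hzero₁ : {u ∈ Icc a b | (h₁ u * conj v).re = 0}.Subsingleton)
    (hzero₂ : {u ∈ Icc a b | (h₂ u * conj v).re = 0}.Subsingleton)
    (ha : |L₁ a - L₂ a| < π / 2) (hb : ‖h₁ b - h₂ b‖ < ‖h₂ b‖) :
    |L₁ b - L₂ b| < 5 * π / 2 := by
  have hleft : a ∈ Icc a b := left_mem_Icc.2 hab
  have hright : b ∈ Icc a b := right_mem_Icc.2 hab
  obtain ⟨β, hβ, hβ₁⟩ := exists_isAngle_abs_sub_lt_pi_div_two (hL₁.2 a hleft) hpos₁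
  have hβ₂ : |L₂ a - β| < π / 2 := by
    refine abs_lt_pi_div_two_of_cos_pos ?_ ((hL₂.2 a hleft).cos_sub_pos hβ hpos₂)
    linarith [abs_sub_le (L₂ a) (L₁ a) β, abs_sub_comm (L₁ a) (L₂ a)]
  have hβ₁' := hL₁.abs_sub_lt_of_subsingleton_re_eq_zero hab hβ hzero₁ hβ₁
  have hβ₂' := hL₂.abs_sub_lt_of_subsingleton_re_eq_zero hab hβ hzero₂ hβ₂
  have hcos : 0 < Real.cos (L₁ b - L₂ b) :=
    (hL₁.2 b hright).cos_sub_pos (hL₂.2 b hright) (re_mul_conj_pos_of_norm_sub_lt hb)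
  by_contra! hcon
  rw [← Real.cos_abs, ← Real.cos_sub_two_pi] at hcos
  refine hcos.not_ge (Real.cos_nonpos_of_pi_div_two_le_of_le (by linarith) ?_)
  linarith [abs_sub_le (L₁ b) β (L₂ b), abs_sub_comm β (L₂ b), Real.pi_pos]

end IsAngleLiftOn

/-! ### Turning numbers of families of paths -/

/-- The angle of `h` can be lifted along `[0, 1]` from `α` to `β + 2πn`: relative to the prescribed
end angles `α` and `β`, the path `h` makes `n` turns around the origin. -/
def HasTurning (h : ℝ → ℂ) (α β : ℝ) (n : ℤ) : Prop :=
  ∃ L, IsAngleLiftOn h L (Icc 0 1) ∧ L 0 = α ∧ L 1 = β + 2 * π * n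

theorem exists_hasTurning {h : ℝ → ℂ} (hc : ContinuousOn h (Icc 0 1))
    (hne : ∀ u ∈ Icc (0 : ℝ) 1, h u ≠ 0) {α β : ℝ} (hα : IsAngle (h 0) α)
    (hβ : IsAngle (h 1) β) : ∃ n, HasTurning h α β n := by
  obtain ⟨L, hL, hL0⟩ := exists_isAngleLiftOn hc hne hα
  have hmem : (1 : ℝ) ∈ Icc (0 : ℝ) 1 := right_mem_Icc.2 zero_le_one
  obtain ⟨n, hn⟩ := (hL.2 1 hmem).exists_eq_add_two_pi_mul_int (hne 1 hmem) hβ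
  exact ⟨n, L, hL, hL0, hn⟩

theorem abs_sub_lt_of_two_pi_mul_lt {m n k : ℤ} {x y : ℝ}
    (h : |x + 2 * π * m - (y + 2 * π * n)| < 2 * π * k - π / 2) (hxy : |x - y| < π / 2) :
    |m - n| < k := by
  rw [abs_lt] at h hxy ⊢
  constructor
  · have : (-k : ℝ) < m - n := by nlinarith [Real.pi_pos]
    exact_mod_cast this
  · have : (m - n : ℝ) < k := by nlinarith [Real.pi_pos]
    exact_mod_cast this

namespace HasTurning

variable {h h₁ h₂ : ℝ → ℂ} {α β α₁ β₁ α₂ β₂ : ℝ} {m n : ℤ}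

theorem eq_of_norm_sub_lt (hm : HasTurning h₁ α₁ β₁ m) (hn : HasTurning h₂ α₂ β₂ n)
    (hclose : ∀ u ∈ Icc (0 : ℝ) 1, ‖h₁ u - h₂ u‖ < ‖h₂ u‖)
    (hα : |α₁ - α₂| < π / 2) (hβ : |β₁ - β₂| < π / 2) : m = n := by
  obtain ⟨L₁, hL₁, rfl, hend₁⟩ := hm
  obtain ⟨L₂, hL₂, rfl, hend₂⟩ := hn
  have hend := hL₁.abs_sub_lt_of_norm_sub_lt hL₂ zero_le_one hclose Real.cos_pi_div_two hα
  rw [hend₁, hend₂] at hend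
  have hlt : |m - n| < 1 :=
    abs_sub_lt_of_two_pi_mul_lt (by push_cast; linarith [Real.pi_pos]) hβ
  exact sub_eq_zero.1 (Int.abs_lt_one_iff.1 hlt)

theorem unique (hm : HasTurning h α β m) (hn : HasTurning h α β n)
    (hne : ∀ u ∈ Icc (0 : ℝ) 1, h u ≠ 0) : m = n :=
  hm.eq_of_norm_sub_lt hn (by simpa using hne) (by simp [Real.pi_pos]) (by simp [Real.pi_pos])

theorem abs_sub_le_one (hm : HasTurning h₁ α₁ β₁ m) (hn : HasTurning h₂ α₂ β₂ n)
    {a b : ℝ} (ha : 0 ≤ a) (hab : a ≤ b) (hb : b ≤ 1)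
    (hbefore : ∀ u ∈ Icc 0 a, ‖h₁ u - h₂ u‖ < ‖h₂ u‖)
    (hafter : ∀ u ∈ Icc b 1, ‖h₁ u - h₂ u‖ < ‖h₂ u‖) {v : ℂ}
    (hpos₁ : 0 < (h₁ a * conj v).re) (hpos₂ : 0 < (h₂ a * conj v).re)
    (hzero₁ : {u ∈ Icc a b | (h₁ u * conj v).re = 0}.Subsingleton)
    (hzero₂ : {u ∈ Icc a b | (h₂ u * conj v).re = 0}.Subsingleton)
    (hα : |α₁ - α₂| < π / 2) (hβ : |β₁ - β₂| < π / 2) : |m - n| ≤ 1 := by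
  obtain ⟨L₁, hL₁, rfl, hend₁⟩ := hm
  obtain ⟨L₂, hL₂, rfl, hend₂⟩ := hn
  have hsub₀ : Icc 0 a ⊆ Icc (0 : ℝ) 1 := Icc_subset_Icc_right (hab.trans hb)
  have hsub : Icc a b ⊆ Icc (0 : ℝ) 1 := Icc_subset_Icc ha hb
  have hsub₁ : Icc b 1 ⊆ Icc (0 : ℝ) 1 := Icc_subset_Icc_left (ha.trans hab)
  have hcos : Real.cos (5 * π / 2) = 0 := Real.cos_eq_zero_iff.2 ⟨2, by push_cast; ring⟩
  have hdiff_a : |L₁ a - L₂ a| < π / 2 :=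
    (hL₁.mono hsub₀).abs_sub_lt_of_norm_sub_lt (hL₂.mono hsub₀) ha hbefore
      Real.cos_pi_div_two hα
  have hdiff_b : |L₁ b - L₂ b| < 5 * π / 2 :=
    (hL₁.mono hsub).abs_sub_lt_of_window (hL₂.mono hsub) hab hpos₁ hpos₂ hzero₁ hzero₂ hdiff_a
      (hafter b (left_mem_Icc.2 hb))
  have hdiff : |L₁ 1 - L₂ 1| < 5 * π / 2 :=
    (hL₁.mono hsub₁).abs_sub_lt_of_norm_sub_lt (hL₂.mono hsub₁) hb hafter hcos hdiff_b
  rw [hend₁, hend₂] at hdiff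
  exact Int.lt_add_one_iff.1
    (abs_sub_lt_of_two_pi_mul_lt (by push_cast; linarith [Real.pi_pos]) hβ)

end HasTurning

/-- Just before `u₀` the path `H s₀` is positive along some vector `v`, and near `u₀` the
`v`-component of each path `H s` with `s` near `s₀` vanishes at most once. -/
def HasSimpleCrossing (H : ℝ → ℝ → ℂ) (s₀ u₀ : ℝ) : Prop :=
  ∃ v : ℂ, (∀ᶠ u in 𝓝[<] u₀, 0 < (H s₀ u * conj v).re) ∧
    ∃ W ∈ 𝓝 u₀, ∀ᶠ s in 𝓝 s₀, {u ∈ W | (H s u * conj v).re = 0}.Subsingleton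

theorem eventually_abs_sub_lt_of_continuousWithinAt {θ : ℝ → ℝ} {R : Set ℝ} {s₀ c : ℝ}
    (hθ : ContinuousWithinAt θ R s₀) (hc : 0 < c) :
    ∀ᶠ p in 𝓝[R] s₀ ×ˢ 𝓝[R] s₀, |θ p.1 - θ p.2| < c := by
  have hlim : Tendsto (fun p : ℝ × ℝ ↦ |θ p.1 - θ p.2|) (𝓝[R] s₀ ×ˢ 𝓝[R] s₀) (𝓝 0) := by
    simpa using ((hθ.tendsto.comp tendsto_fst).sub (hθ.tendsto.comp tendsto_snd)).abs
  exact hlim.eventually (gt_mem_nhds hc)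

section Family

variable {H : ℝ → ℝ → ℂ} {θ Φ : ℝ → ℝ} {N : ℝ → ℤ} {s₀ : ℝ}

theorem eventually_forall_norm_sub_lt (hH : Continuous (Function.uncurry H)) {K : Set ℝ}
    (hK : IsCompact K) (hne : ∀ u ∈ K, H s₀ u ≠ 0) (R : Set ℝ) :
    ∀ᶠ p in 𝓝[R] s₀ ×ˢ 𝓝[R] s₀, ∀ u ∈ K, ‖H p.1 u - H p.2 u‖ < ‖H p.2 u‖ := by
  have hfull : ∀ᶠ p in 𝓝 (s₀, s₀), ∀ u ∈ K, ‖H p.1 u - H p.2 u‖ < ‖H p.2 u‖ := by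
    refine hK.eventually_forall_of_forall_eventually fun u hu ↦ ?_
    have hfst : Continuous fun z : (ℝ × ℝ) × ℝ ↦ H z.1.1 z.2 :=
      hH.comp (f := fun z : (ℝ × ℝ) × ℝ ↦ (z.1.1, z.2)) (by fun_prop)
    have hsnd : Continuous fun z : (ℝ × ℝ) × ℝ ↦ H z.1.2 z.2 :=
      hH.comp (f := fun z : (ℝ × ℝ) × ℝ ↦ (z.1.2, z.2)) (by fun_prop)
    exact (isOpen_lt (hfst.sub hsnd).norm hsnd.norm).mem_nhds (by simpa using hne u hu)
  rw [nhds_prod_eq] at hfull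
  exact hfull.filter_mono (prod_mono nhdsWithin_le_nhds nhdsWithin_le_nhds)

variable {R : Set ℝ} (hH : Continuous (Function.uncurry H)) (hθ : ContinuousWithinAt θ R s₀)
  (hΦ : ContinuousWithinAt Φ R s₀) (hN : ∀ s ∈ R, HasTurning (H s) (θ s) (Φ s) (N s))

include hH hθ hΦ hN

theorem eventually_turning_eq (hs₀ : s₀ ∈ R) (hne : ∀ u ∈ Icc (0 : ℝ) 1, H s₀ u ≠ 0) :
    ∀ᶠ s in 𝓝[R] s₀, N s = N s₀ := by
  have hpi : 0 < π / 2 := by positivity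
  have hpair : ∀ᶠ p in 𝓝[R] s₀ ×ˢ 𝓝[R] s₀, p.1 ∈ R → p.2 ∈ R → N p.1 = N p.2 := by
    filter_upwards [eventually_forall_norm_sub_lt hH isCompact_Icc hne R,
      eventually_abs_sub_lt_of_continuousWithinAt hθ hpi,
      eventually_abs_sub_lt_of_continuousWithinAt hΦ hpi] with p hclose hθp hΦp hp₁ hp₂
    exact (hN _ hp₁).eq_of_norm_sub_lt (hN _ hp₂) hclose hθp hΦp
  filter_upwards [hpair.curry, self_mem_nhdsWithin] with s hs hsR
  exact mem_of_mem_nhdsWithin hs₀ hs hsR hs₀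

theorem eventually_abs_turning_sub_le_one {u₀ : ℝ} (hu₀ : u₀ ∈ Ioo (0 : ℝ) 1)
    (hne : ∀ u ∈ Icc (0 : ℝ) 1, u ≠ u₀ → H s₀ u ≠ 0) (hcross : HasSimpleCrossing H s₀ u₀) :
    ∀ᶠ p in 𝓝[R] s₀ ×ˢ 𝓝[R] s₀, |N p.1 - N p.2| ≤ 1 := by
  have hpi : 0 < π / 2 := by positivity
  obtain ⟨v, hv, W, hW, hsub⟩ := hcross
  obtain ⟨l, r, hlr, hlrW⟩ := mem_nhds_iff_exists_Ioo_subset.1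
    (inter_mem hW (isOpen_Ioo.mem_nhds hu₀))
  obtain ⟨a, hva, hla, hau⟩ := (hv.and (Ioo_mem_nhdsLT hlr.1)).exists
  obtain ⟨b, hub, hbr⟩ := exists_between hlr.2
  have hwindow : Icc a b ⊆ W ∩ Ioo 0 1 := (Icc_subset_Ioo hla hbr).trans hlrW
  have hab : a ≤ b := (hau.trans hub).le
  obtain ⟨ha0, -⟩ := (hwindow (left_mem_Icc.2 hab)).2
  obtain ⟨-, hb1⟩ := (hwindow (right_mem_Icc.2 hab)).2
  have hpos : ∀ᶠ s in 𝓝[R] s₀, 0 < (H s a * conj v).re := by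
    have hcont : Continuous fun s ↦ (H s a * conj v).re :=
      Complex.continuous_re.comp ((hH.comp (Continuous.prodMk_left a)).mul continuous_const)
    exact nhdsWithin_le_nhds (hcont.continuousAt.eventually (lt_mem_nhds hva))
  have hgood : ∀ᶠ s in 𝓝[R] s₀, s ∈ R ∧ 0 < (H s a * conj v).re ∧
      {u ∈ Icc a b | (H s u * conj v).re = 0}.Subsingleton :=
    eventually_mem_nhdsWithin.and <| hpos.and <| nhdsWithin_le_nhds <|
      hsub.mono fun s hs ↦ hs.anti fun u hu ↦ ⟨(hwindow hu.1).1, hu.2⟩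
  filter_upwards [hgood.prod_mk hgood,
    eventually_forall_norm_sub_lt hH (isCompact_Icc (a := 0) (b := a))
      (fun u hu ↦ hne u ⟨hu.1, by linarith [hu.2, hu₀.2]⟩ (hu.2.trans_lt hau).ne) R,
    eventually_forall_norm_sub_lt hH (isCompact_Icc (a := b) (b := 1))
      (fun u hu ↦ hne u ⟨by linarith [hu.1, hu₀.1], hu.2⟩ (hub.trans_le hu.1).ne') R,
    eventually_abs_sub_lt_of_continuousWithinAt hθ hpi,
    eventually_abs_sub_lt_of_continuousWithinAt hΦ hpi]
    with p ⟨⟨hp₁, hpos₁, hzero₁⟩, hp₂, hpos₂, hzero₂⟩ hbefore hafter hθp hΦp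
  exact (hN _ hp₁).abs_sub_le_one (hN _ hp₂) ha0.le hab hb1.le hbefore hafter hpos₁ hpos₂
    hzero₁ hzero₂ hθp hΦp

end Family

section Count

variable {H : ℝ → ℝ → ℂ} {S : Finset ℝ} {θ Φ : ℝ → ℝ}

theorem abs_turning_sub_le_card_of_hasTurning (hH : Continuous (Function.uncurry H))
    (hS : ∀ s ∈ S, s ∈ Ioo (0 : ℝ) 1)
    (hne : ∀ s ∈ Icc (0 : ℝ) 1 \ S, ∀ u ∈ Icc (0 : ℝ) 1, H s u ≠ 0)
    (hcross : ∀ s ∈ S, ∃ u₀ ∈ Ioo (0 : ℝ) 1,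
      (∀ u ∈ Icc (0 : ℝ) 1, u ≠ u₀ → H s u ≠ 0) ∧ HasSimpleCrossing H s u₀)
    (hθ : ContinuousOn θ (Icc 0 1)) (hΦ : ContinuousOn Φ (Icc 0 1)) {N : ℝ → ℤ}
    (hN : ∀ s ∈ Icc (0 : ℝ) 1 \ S, HasTurning (H s) (θ s) (Φ s) (N s)) :
    |N 0 - N 1| ≤ S.card := by
  have hθc : ∀ s ∈ Icc (0 : ℝ) 1, ContinuousWithinAt θ (Icc 0 1 \ S) s :=
    fun s hs ↦ (hθ s hs).mono sdiff_subset
  have hΦc : ∀ s ∈ Icc (0 : ℝ) 1, ContinuousWithinAt Φ (Icc 0 1 \ S) s :=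
    fun s hs ↦ (hΦ s hs).mono sdiff_subset
  refine abs_sub_le_card_of_jump_le_one zero_le_one hS (fun s hs hsS ↦ ?_) (fun s hsS ↦ ?_)
  · have hopen : (S : Set ℝ)ᶜ ∈ 𝓝 s := S.finite_toSet.isClosed.isOpen_compl.mem_nhds hsS
    have hconst :=
      eventually_turning_eq hH (hθc s hs) (hΦc s hs) hN ⟨hs, hsS⟩ (hne s ⟨hs, hsS⟩)
    rwa [sdiff_eq, nhdsWithin_inter_of_mem' (mem_nhdsWithin_of_mem_nhds hopen)] at hconst
  · obtain ⟨u₀, hu₀, hne', hcross'⟩ := hcross s hsS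
    have hs := Ioo_subset_Icc_self (hS s hsS)
    have hpair := eventually_abs_turning_sub_le_one hH (hθc s hs) (hΦc s hs) hN hu₀ hne' hcross'
    have hle : 𝓝[≠] s ≤ 𝓝[Icc (0 : ℝ) 1 \ S] s :=
      nhdsWithin_le_of_mem (nhdsNE_of_nhdsNE_sdiff_finite
        (nhdsWithin_le_nhds (Icc_mem_nhds (hS s hsS).1 (hS s hsS).2)) S.finite_toSet)
    have hlt := (nhdsLT_le_nhdsNE s).trans hle
    have hgt := (nhdsGT_le_nhdsNE s).trans hle
    exact (hpair.filter_mono (prod_mono hlt hgt)).curry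

theorem abs_turning_sub_le_card (hH : Continuous (Function.uncurry H))
    (hS : ∀ s ∈ S, s ∈ Ioo (0 : ℝ) 1)
    (hne : ∀ s ∈ Icc (0 : ℝ) 1 \ S, ∀ u ∈ Icc (0 : ℝ) 1, H s u ≠ 0)
    (hcross : ∀ s ∈ S, ∃ u₀ ∈ Ioo (0 : ℝ) 1,
      (∀ u ∈ Icc (0 : ℝ) 1, u ≠ u₀ → H s u ≠ 0) ∧ HasSimpleCrossing H s u₀)
    (hθ : IsAngleLiftOn (H · 0) θ (Icc 0 1)) (hΦ : IsAngleLiftOn (H · 1) Φ (Icc 0 1)) {m n : ℤ}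
    (hm : HasTurning (H 0) (θ 0) (Φ 0) m) (hn : HasTurning (H 1) (θ 1) (Φ 1) n) :
    |m - n| ≤ S.card := by
  have hex : ∀ s : ℝ, ∃ k : ℤ, s ∈ Icc (0 : ℝ) 1 \ S → HasTurning (H s) (θ s) (Φ s) k := by
    intro s
    by_cases hs : s ∈ Icc (0 : ℝ) 1 \ S
    · obtain ⟨k, hk⟩ := exists_hasTurning (hH.comp (Continuous.prodMk_right s)).continuousOn
        (hne s hs) (hθ.2 s hs.1) (hΦ.2 s hs.1)
      exact ⟨k, fun _ ↦ hk⟩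
    · exact ⟨0, fun h ↦ absurd h hs⟩
  choose N hN using hex
  have h0 : (0 : ℝ) ∈ Icc (0 : ℝ) 1 \ S := ⟨by simp, fun h ↦ (hS 0 h).1.false⟩
  have h1 : (1 : ℝ) ∈ Icc (0 : ℝ) 1 \ S := ⟨by simp, fun h ↦ (hS 1 h).2.false⟩
  rw [hm.unique (hN 0 h0) (hne 0 h0), hn.unique (hN 1 h1) (hne 1 h1)]
  exact abs_turning_sub_le_card_of_hasTurning hH hS hne hcross hθ.1 hΦ.1 hN

end Count

/-! ### Chords of a closed curve -/

/-- The slope of the chord of `f` from `s` to `t`, written as an average of the derivative so that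
it extends continuously to `s = t`. -/
def chordSlope (f : ℝ → ℂ) (s t : ℝ) : ℂ := ∫ u in (0 : ℝ)..1, deriv f (s + u * (t - s))

/-- A continuous positive multiple of the chord `f t - f s` of a curve of period `1`, for
`0 ≤ t - s ≤ 1`. When `t - s > 1/2` the chord is seen as running backwards from `s` to `t - 1`,
which keeps it from vanishing as `t - s` tends to `1`. -/
def chordDir (f : ℝ → ℂ) (s t : ℝ) : ℂ :=
  if t - s ≤ 1 / 2 then chordSlope f s t else -chordSlope f s (t - 1)

/-- The directions of the chords from `f s` to the points of the arc `f '' [s, 1]`, with the end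
point of the chord parametrized by `u ∈ [0, 1]`. -/
def chordFan (f : ℝ → ℂ) (s u : ℝ) : ℂ := chordDir f s (s + u * (1 - s))

section Chords

variable {f : ℝ → ℂ}

theorem chordSlope_self (f : ℝ → ℂ) (s : ℝ) : chordSlope f s s = deriv f s := by
  simp [chordSlope]

theorem chordDir_self (f : ℝ → ℂ) (s : ℝ) : chordDir f s s = deriv f s := by
  rw [chordDir, if_pos (by norm_num), chordSlope_self]

theorem chordDir_zero_one (f : ℝ → ℂ) : chordDir f 0 1 = -deriv f 0 := by
  rw [chordDir, if_neg (by norm_num), sub_self, chordSlope_self]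

theorem chordFan_zero_left (f : ℝ → ℂ) (u : ℝ) : chordFan f 0 u = chordDir f 0 u := by
  simp [chordFan]

theorem chordFan_one_left (f : ℝ → ℂ) (u : ℝ) : chordFan f 1 u = deriv f 1 := by
  simp [chordFan, chordDir_self]

theorem chordFan_zero_right (f : ℝ → ℂ) (s : ℝ) : chordFan f s 0 = deriv f s := by
  simp [chordFan, chordDir_self]

theorem chordFan_one_right (f : ℝ → ℂ) (s : ℝ) : chordFan f s 1 = chordDir f s 1 := by
  simp [chordFan]

variable (hf : ContDiff ℝ 1 f)

include hf

theorem sub_eq_mul_chordSlope (s t : ℝ) : f t - f s = ((t - s : ℝ) : ℂ) * chordSlope f s t := by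
  have hderiv : ∀ x ∈ uIcc s t, HasDerivAt f (deriv f x) x :=
    fun x _ ↦ (hf.differentiable one_ne_zero x).hasDerivAt
  rw [← intervalIntegral.integral_eq_sub_of_hasDerivAt hderiv
    ((hf.continuous_deriv le_rfl).intervalIntegrable s t), chordSlope]
  have hsubst := intervalIntegral.smul_integral_comp_add_mul (deriv f) (t - s) s (a := 0) (b := 1)
  simp only [mul_zero, add_zero, mul_one, add_sub_cancel, Complex.real_smul] at hsubst
  simp_rw [mul_comm _ (t - s)]
  exact hsubst.symm

theorem continuous_chordSlope : Continuous (Function.uncurry (chordSlope f)) := by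
  have := hf.continuous_deriv le_rfl
  exact intervalIntegral.continuous_parametric_intervalIntegral_of_continuous'
    (f := fun p : ℝ × ℝ ↦ fun u ↦ deriv f (p.1 + u * (p.2 - p.1))) (by fun_prop) 0 1

theorem exists_strictMonoOn_re_mul_conj_deriv {t₀ : ℝ} (ht₀ : deriv f t₀ ≠ 0) :
    ∃ U ∈ 𝓝 t₀, StrictMonoOn (fun t ↦ (f t * conj (deriv f t₀)).re) U := by
  set w := deriv f t₀ with hw
  have hcont : Continuous fun t ↦ (deriv f t * conj w).re := by
    have := hf.continuous_deriv le_rfl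
    fun_prop
  have hpos : 0 < (deriv f t₀ * conj w).re := by
    rw [← hw, Complex.mul_conj, Complex.ofReal_re]
    exact Complex.normSq_pos.2 ht₀
  have hderiv : ∀ t, HasDerivAt (fun t ↦ (f t * conj w).re) (deriv f t * conj w).re t := fun t ↦
    Complex.reCLM.hasFDerivAt.comp_hasDerivAt t
      ((hf.differentiable one_ne_zero t).hasDerivAt.mul_const _)
  obtain ⟨l, r, hlr, hsub⟩ := mem_nhds_iff_exists_Ioo_subset.1
    (hcont.continuousAt.eventually (lt_mem_nhds hpos))
  refine ⟨Ioo l r, isOpen_Ioo.mem_nhds hlr, strictMonoOn_of_deriv_pos (convex_Ioo l r)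
    (fun t _ ↦ (hderiv t).continuousAt.continuousWithinAt) fun t ht ↦ ?_⟩
  rw [(hderiv t).deriv]
  exact hsub (interior_subset ht)

variable (hper : Function.Periodic f 1)

include hper

theorem exists_pos_sub_eq_mul_chordDir {s t : ℝ} (h0 : 0 < t - s) (h1 : t - s < 1) :
    ∃ m : ℝ, 0 < m ∧ f t - f s = (m : ℂ) * chordDir f s t := by
  unfold chordDir
  split_ifs with h
  · exact ⟨t - s, h0, sub_eq_mul_chordSlope hf s t⟩
  · refine ⟨1 - (t - s), by linarith, ?_⟩
    rw [← hper.sub_eq t, sub_eq_mul_chordSlope hf s (t - 1)]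
    push_cast
    ring

theorem continuous_chordDir : Continuous (Function.uncurry (chordDir f)) := by
  have hslope := continuous_chordSlope hf
  refine Continuous.if_le hslope
    (hslope.comp (f := fun q : ℝ × ℝ ↦ (q.1, q.2 - 1)) (by fun_prop)).neg
    (by fun_prop) (by fun_prop) ?_
  rintro ⟨s, t⟩ (h : t - s = 1 / 2)
  have hforward := sub_eq_mul_chordSlope hf s t
  have hbackward := sub_eq_mul_chordSlope hf s (t - 1)
  rw [hper.sub_eq, hforward, show t - 1 - s = -(t - s) by linarith, h] at hbackward
  refine mul_left_cancel₀ (show ((1 / 2 : ℝ) : ℂ) ≠ 0 by norm_num) (hbackward.trans ?_)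
  simp

theorem continuous_chordFan : Continuous (Function.uncurry (chordFan f)) :=
  (continuous_chordDir hf hper).comp
    (f := fun q : ℝ × ℝ ↦ (q.1, q.1 + q.2 * (1 - q.1))) (by fun_prop)

theorem exists_pos_re_sub_eq_mul_re_chordFan {s u : ℝ} (hlen : u * (1 - s) ∈ Ioo (0 : ℝ) 1)
    (w : ℂ) : ∃ m : ℝ, 0 < m ∧
      (f (s + u * (1 - s)) * w).re - (f s * w).re = m * (chordFan f s u * w).re := by
  obtain ⟨m, hm, hchord⟩ := exists_pos_sub_eq_mul_chordDir hf hper (s := s)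
    (t := s + u * (1 - s)) (by simpa using hlen.1) (by simpa using hlen.2)
  refine ⟨m, hm, ?_⟩
  rw [← Complex.sub_re, ← sub_mul, hchord, mul_assoc, Complex.re_ofReal_mul, chordFan]

theorem hasSimpleCrossing_chordFan {s₀ u₀ : ℝ} (hs₀ : s₀ < 1)
    (hu₀ : u₀ * (1 - s₀) ∈ Ioo (0 : ℝ) 1) (ht₀ : deriv f (s₀ + u₀ * (1 - s₀)) ≠ 0)
    (heq : f s₀ = f (s₀ + u₀ * (1 - s₀))) : HasSimpleCrossing (chordFan f) s₀ u₀ := by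
  obtain ⟨U, hU, hmono⟩ := exists_strictMonoOn_re_mul_conj_deriv hf ht₀
  set w := deriv f (s₀ + u₀ * (1 - s₀))
  have hnear : ∀ᶠ q in 𝓝 s₀ ×ˢ 𝓝 u₀, q.1 < 1 ∧ q.2 * (1 - q.1) ∈ Ioo (0 : ℝ) 1 ∧
      q.1 + q.2 * (1 - q.1) ∈ U := by
    rw [← nhds_prod_eq]
    have hlen : Continuous fun q : ℝ × ℝ ↦ q.2 * (1 - q.1) := by fun_prop
    have hend : Continuous fun q : ℝ × ℝ ↦ q.1 + q.2 * (1 - q.1) := by fun_prop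
    exact (continuous_fst.continuousAt.eventually (gt_mem_nhds hs₀)).and
      ((hlen.continuousAt.eventually (isOpen_Ioo.mem_nhds hu₀)).and
        (hend.continuousAt.eventually hU))
  obtain ⟨A, hA, W, hW, hAW⟩ := mem_prod_iff.1 hnear
  refine ⟨-w, ?_, W, hW, mem_of_superset hA fun s hs ↦ ?_⟩
  · filter_upwards [nhdsWithin_le_nhds hW, self_mem_nhdsWithin] with u huW hu
    obtain ⟨-, hlen, hmem⟩ := hAW (mk_mem_prod (mem_of_mem_nhds hA) huW)
    obtain ⟨m, hm, hchord⟩ := exists_pos_re_sub_eq_mul_re_chordFan hf hper hlen (conj w)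
    have hlt : s₀ + u * (1 - s₀) < s₀ + u₀ * (1 - s₀) :=
      add_lt_add_right (mul_lt_mul_of_pos_right hu (sub_pos.2 hs₀)) s₀
    have hdecr := hmono hmem (mem_of_mem_nhds hU) hlt
    simp only [← heq] at hdecr
    rw [map_neg, mul_neg, Complex.neg_re, neg_pos]
    exact neg_of_mul_neg_right (hchord ▸ sub_neg.2 hdecr) hm.le
  · have heq_of_zero : ∀ u ∈ {u ∈ W | (chordFan f s u * conj (-w)).re = 0},
        (f (s + u * (1 - s)) * conj w).re = (f s * conj w).re := by
      rintro u ⟨huW, hu⟩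
      obtain ⟨m, -, hchord⟩ := exists_pos_re_sub_eq_mul_re_chordFan hf hper
        (hAW (mk_mem_prod hs huW)).2.1 (conj w)
      rw [map_neg, mul_neg, Complex.neg_re, neg_eq_zero] at hu
      rwa [hu, mul_zero, sub_eq_zero] at hchord
    intro u hu u' hu'
    obtain ⟨hs1, -, hmem⟩ := hAW (mk_mem_prod hs hu.1)
    have hend : s + u * (1 - s) = s + u' * (1 - s) :=
      hmono.injOn hmem (hAW (mk_mem_prod hs hu'.1)).2.2
        ((heq_of_zero u hu).trans (heq_of_zero u' hu').symm)
    exact mul_right_cancel₀ (sub_pos.2 hs1).ne' (add_left_cancel hend)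

end Chords

/-! ### The rotation number of a curve based at its lowest point -/

/-- The Whitney winding number of a parametrized curve: `PlanarCurve.HasWhitney` for functions. -/
def HasRotationNumber (f : ℝ → ℂ) (ω : ℤ) : Prop :=
  ∃ θ : ℝ → ℝ, Continuous θ ∧ (∀ t, IsAngle (deriv f t) (θ t)) ∧ θ 1 - θ 0 = 2 * π * ω

theorem HasRotationNumber.exists_lift_eq {f : ℝ → ℂ} {ω : ℤ} (hω : HasRotationNumber f ω)
    (h0 : deriv f 0 ≠ 0) {α : ℝ} (hα : IsAngle (deriv f 0) α) :
    ∃ θ : ℝ → ℝ, Continuous θ ∧ (∀ t, IsAngle (deriv f t) (θ t)) ∧ θ 0 = α ∧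
      θ 1 = α + 2 * π * ω := by
  obtain ⟨θ, hθ, hangle, hturn⟩ := hω
  obtain ⟨n, hn⟩ := hα.exists_eq_add_two_pi_mul_int h0 (hangle 0)
  refine ⟨fun t ↦ θ t + 2 * π * n, hθ.add_const _, fun t ↦ (hangle t).add_two_pi_mul_int n,
    hn.symm, ?_⟩
  linarith

/-- The parameters in `(0, 1)` at which `f` visits a point to which it returns before time `1`. -/
def firstVisits (f : ℝ → ℂ) : Set ℝ := {s ∈ Ioo (0 : ℝ) 1 | ∃ t ∈ Ioo s 1, f s = f t}

/-- A closed immersed curve of class `C¹` whose base point `f 0` is a lowest point, is visited only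
once per period and is traversed from left to right. -/
structure IsBottomBased (f : ℝ → ℂ) : Prop where
  periodic : Function.Periodic f 1
  contDiff : ContDiff ℝ 1 f
  deriv_ne_zero : ∀ t, deriv f t ≠ 0
  re_deriv_pos : 0 < (deriv f 0).re
  im_le : ∀ t, (f 0).im ≤ (f t).im
  ne_base : ∀ t ∈ Ioo (0 : ℝ) 1, f t ≠ f 0

theorem periodic_deriv {E : Type*} [NormedAddCommGroup E] [NormedSpace ℝ E] {f : ℝ → E} {T : ℝ}
    (hf : Function.Periodic f T) : Function.Periodic (deriv f) T := fun t ↦ by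
  rw [← deriv_comp_add_const, funext hf]

theorem im_deriv_eq_zero_of_forall_im_le {f : ℝ → ℂ} {b : ℝ} (hf : DifferentiableAt ℝ f b)
    (hb : ∀ t, (f b).im ≤ (f t).im) : (deriv f b).im = 0 := by
  have hderiv : HasDerivAt (fun t ↦ (f t).im) (deriv f b).im b :=
    Complex.imCLM.hasFDerivAt.comp_hasDerivAt b hf.hasDerivAt
  have hmin : IsLocalMin (fun t ↦ (f t).im) b := Eventually.of_forall hb
  exact hmin.hasDerivAt_eq_zero hderiv

namespace IsBottomBased

variable {f : ℝ → ℂ} (hf : IsBottomBased f)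

include hf

theorem apply_one : f 1 = f 0 := by simpa using hf.periodic 0

theorem deriv_zero_eq : deriv f 0 = ((deriv f 0).re : ℂ) :=
  Complex.ext rfl (im_deriv_eq_zero_of_forall_im_le
    (hf.contDiff.differentiable one_ne_zero 0) hf.im_le)

theorem deriv_one_eq : deriv f 1 = ((deriv f 0).re : ℂ) := by
  rw [← hf.deriv_zero_eq]
  simpa using periodic_deriv hf.periodic 0

theorem eq_of_chordDir_eq_zero {s t : ℝ} (hs : 0 ≤ s) (hst : s ≤ t) (ht : t ≤ 1)
    (hzero : chordDir f s t = 0) : s ∈ Ioo (0 : ℝ) 1 ∧ t ∈ Ioo s 1 ∧ f s = f t := by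
  have hst' : s < t := hst.lt_of_ne fun h ↦
    hf.deriv_ne_zero s (by rwa [← h, chordDir_self] at hzero)
  have hlen : t - s < 1 := by
    refine lt_of_le_of_ne (by linarith) fun h ↦ hf.deriv_ne_zero 0 ?_
    obtain ⟨rfl, rfl⟩ : s = 0 ∧ t = 1 := ⟨by linarith, by linarith⟩
    rwa [chordDir_zero_one, neg_eq_zero] at hzero
  obtain ⟨m, -, hchord⟩ :=
    exists_pos_sub_eq_mul_chordDir hf.contDiff hf.periodic (sub_pos.2 hst') hlen
  rw [hzero, mul_zero, sub_eq_zero] at hchord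
  have hs' : 0 < s := hs.lt_of_ne' fun h ↦ by
    subst h
    exact hf.ne_base t ⟨hst', by linarith⟩ hchord
  have ht' : t < 1 := ht.lt_of_ne fun h ↦ by
    subst h
    exact hf.ne_base s ⟨hs', hst'⟩ (hchord.symm.trans hf.apply_one)
  exact ⟨⟨hs', hst'.trans ht'⟩, ⟨hst', ht'⟩, hchord.symm⟩

theorem chordDir_zero_left_im_nonneg {t : ℝ} (ht : t ∈ Icc (0 : ℝ) 1) :
    0 ≤ (chordDir f 0 t).im := by
  rcases eq_or_lt_of_le ht.1 with rfl | h0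
  · rw [chordDir_self, hf.deriv_zero_eq, Complex.ofReal_im]
  rcases eq_or_lt_of_le ht.2 with rfl | h1
  · rw [chordDir_zero_one, hf.deriv_zero_eq, Complex.neg_im, Complex.ofReal_im, neg_zero]
  obtain ⟨m, hm, hchord⟩ := exists_pos_sub_eq_mul_chordDir hf.contDiff hf.periodic
    (s := 0) (t := t) (by linarith) (by linarith)
  have him := congrArg Complex.im hchord
  rw [Complex.im_ofReal_mul, Complex.sub_im] at him
  exact nonneg_of_mul_nonneg_right (him ▸ sub_nonneg.2 (hf.im_le t)) hm

theorem chordDir_one_right_im_nonpos {s : ℝ} (hs : s ∈ Icc (0 : ℝ) 1) :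
    (chordDir f s 1).im ≤ 0 := by
  rcases eq_or_lt_of_le hs.1 with rfl | h0
  · rw [chordDir_zero_one, hf.deriv_zero_eq, Complex.neg_im, Complex.ofReal_im, neg_zero]
  rcases eq_or_lt_of_le hs.2 with rfl | h1
  · rw [chordDir_self, hf.deriv_one_eq, Complex.ofReal_im]
  obtain ⟨m, hm, hchord⟩ := exists_pos_sub_eq_mul_chordDir hf.contDiff hf.periodic
    (s := s) (t := 1) (by linarith) (by linarith)
  have him := congrArg Complex.im hchord
  rw [Complex.im_ofReal_mul, Complex.sub_im, hf.apply_one] at him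
  exact nonpos_of_mul_nonpos_right (him ▸ sub_nonpos.2 (hf.im_le s)) hm

theorem isAngleLiftOn_arg_chordFan_zero :
    IsAngleLiftOn (chordFan f 0) (fun u ↦ (chordFan f 0 u).arg) (Icc 0 1) := by
  refine isAngleLiftOn_arg ((continuous_chordFan hf.contDiff hf.periodic).comp
    (Continuous.prodMk_right 0)).continuousOn fun u hu ↦ ?_
  rw [chordFan_zero_left]
  exact ⟨hf.chordDir_zero_left_im_nonneg hu, fun h ↦
    (hf.eq_of_chordDir_eq_zero le_rfl hu.1 hu.2 h).1.1.false⟩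

theorem isAngleLiftOn_arg_chordFan_one :
    IsAngleLiftOn (chordFan f · 1) (fun s ↦ (-chordFan f s 1).arg + π) (Icc 0 1) := by
  have hcont : Continuous (chordFan f · 1) :=
    (continuous_chordFan hf.contDiff hf.periodic).comp (Continuous.prodMk_left 1)
  have hneg := isAngleLiftOn_arg (h := fun s ↦ -chordFan f s 1) (s := Icc 0 1)
    hcont.neg.continuousOn fun s hs ↦ by
    rw [chordFan_one_right, Complex.neg_im, neg_nonneg, neg_ne_zero]
    exact ⟨hf.chordDir_one_right_im_nonpos hs, fun h ↦
      (hf.eq_of_chordDir_eq_zero hs.1 hs.2 le_rfl h).2.1.2.false⟩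
  exact ⟨hneg.1.add_const π, fun s hs ↦ by simpa using (hneg.2 s hs).neg⟩

/-- Opening the fan at the lowest point sweeps the half plane above it. -/
theorem hasTurning_chordFan_zero :
    HasTurning (chordFan f 0) 0 ((-chordFan f 0 1).arg + π) 0 := by
  refine ⟨_, hf.isAngleLiftOn_arg_chordFan_zero, ?_, ?_⟩
  · rw [chordFan_zero_right, hf.deriv_zero_eq, Complex.arg_ofReal_of_nonneg hf.re_deriv_pos.le]
  · rw [chordFan_zero_left, chordDir_zero_one, neg_neg, hf.deriv_zero_eq,
      Complex.arg_ofReal_of_nonneg hf.re_deriv_pos.le, ← Complex.ofReal_neg,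
      Complex.arg_ofReal_of_neg (neg_neg_iff_pos.2 hf.re_deriv_pos)]
    simp

theorem hasTurning_chordFan_one (ω : ℤ) :
    HasTurning (chordFan f 1) (2 * π * ω) ((-chordFan f 1 1).arg + π) (ω - 1) := by
  refine ⟨fun _ ↦ 2 * π * ω, ⟨continuousOn_const, fun u _ ↦ ?_⟩, rfl, ?_⟩
  · rw [chordFan_one_left, hf.deriv_one_eq]
    simpa using (isAngle_ofReal_of_nonneg hf.re_deriv_pos.le).add_two_pi_mul_int ω
  · rw [chordFan_one_left, hf.deriv_one_eq, ← Complex.ofReal_neg,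
      Complex.arg_ofReal_of_neg (neg_neg_iff_pos.2 hf.re_deriv_pos)]
    push_cast
    ring

theorem eq_of_chordFan_eq_zero {s u : ℝ} (hs : s ∈ Icc (0 : ℝ) 1) (hu : u ∈ Icc (0 : ℝ) 1)
    (hzero : chordFan f s u = 0) :
    s ∈ Ioo (0 : ℝ) 1 ∧ s + u * (1 - s) ∈ Ioo s 1 ∧ f s = f (s + u * (1 - s)) := by
  have hlen : 0 ≤ u * (1 - s) := mul_nonneg hu.1 (sub_nonneg.2 hs.2)
  have hlen' : u * (1 - s) ≤ 1 - s := mul_le_of_le_one_left (sub_nonneg.2 hs.2) hu.2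
  exact hf.eq_of_chordDir_eq_zero hs.1 (by linarith) (by linarith) hzero

theorem exists_hasSimpleCrossing {s : ℝ} (hs : s ∈ firstVisits f)
    (htwo : {t ∈ Ioo s 1 | f s = f t}.Subsingleton) :
    ∃ u₀ ∈ Ioo (0 : ℝ) 1, (∀ u ∈ Icc (0 : ℝ) 1, u ≠ u₀ → chordFan f s u ≠ 0) ∧
      HasSimpleCrossing (chordFan f) s u₀ := by
  obtain ⟨hs01, t₀, ht₀, heq⟩ := hs
  have hpos : 0 < 1 - s := sub_pos.2 hs01.2
  obtain ⟨u₀, rfl⟩ : ∃ u₀, t₀ = s + u₀ * (1 - s) :=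
    ⟨(t₀ - s) / (1 - s), by rw [div_mul_cancel₀ _ hpos.ne']; ring⟩
  have hu₀ : 0 < u₀ * (1 - s) ∧ u₀ * (1 - s) < 1 - s :=
    ⟨by linarith [ht₀.1], by linarith [ht₀.2]⟩
  refine ⟨u₀, ⟨pos_of_mul_pos_left hu₀.1 hpos.le, (mul_lt_iff_lt_one_left hpos).1 hu₀.2⟩,
    fun u hu hne hzero ↦ hne ?_,
    hasSimpleCrossing_chordFan hf.contDiff hf.periodic hs01.2
      ⟨hu₀.1, hu₀.2.trans (by linarith [hs01.1])⟩ (hf.deriv_ne_zero _) heq⟩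
  have hmem := (hf.eq_of_chordFan_eq_zero (Ioo_subset_Icc_self hs01) hu hzero).2
  exact mul_right_cancel₀ hpos.ne' (add_left_cancel (htwo hmem ⟨ht₀, heq⟩))

theorem abs_one_sub_le_ncard_firstVisits (hfin : (firstVisits f).Finite)
    (htwo : ∀ s ∈ firstVisits f, {t ∈ Ioo s 1 | f s = f t}.Subsingleton) {ω : ℤ}
    (hω : HasRotationNumber f ω) : |1 - ω| ≤ (firstVisits f).ncard := by
  have hbase : IsAngle (deriv f 0) 0 := by
    rw [hf.deriv_zero_eq]
    exact isAngle_ofReal_of_nonneg hf.re_deriv_pos.le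
  obtain ⟨θ, hθ, hangle, hθ0, hθ1⟩ := hω.exists_lift_eq (hf.deriv_ne_zero 0) hbase
  have hθlift : IsAngleLiftOn (chordFan f · 0) θ (Icc 0 1) :=
    ⟨hθ.continuousOn, fun s _ ↦ by simpa only [chordFan_zero_right] using hangle s⟩
  have hne : ∀ s ∈ Icc (0 : ℝ) 1 \ hfin.toFinset, ∀ u ∈ Icc (0 : ℝ) 1, chordFan f s u ≠ 0 := by
    intro s hs u hu hzero
    obtain ⟨hs01, hmem, heq⟩ := hf.eq_of_chordFan_eq_zero hs.1 hu hzero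
    exact hs.2 (hfin.mem_toFinset.2 ⟨hs01, _, hmem, heq⟩)
  have hcount := abs_turning_sub_le_card (continuous_chordFan hf.contDiff hf.periodic)
    (fun s hs ↦ (hfin.mem_toFinset.1 hs).1) hne
    (fun s hs ↦ hf.exists_hasSimpleCrossing (hfin.mem_toFinset.1 hs)
      (htwo s (hfin.mem_toFinset.1 hs)))
    hθlift hf.isAngleLiftOn_arg_chordFan_one (by rw [hθ0]; exact hf.hasTurning_chordFan_zero)
    (by rw [hθ1, zero_add]; exact hf.hasTurning_chordFan_one ω)
  rw [ncard_eq_toFinset_card _ hfin]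
  simpa using hcount

end IsBottomBased

/-! ### Symmetries of stable curves -/

theorem HasRotationNumber.comp_add_const {f : ℝ → ℂ} {ω : ℤ} (hω : HasRotationNumber f ω)
    (hf : Function.Periodic f 1) (hd : ∀ t, deriv f t ≠ 0) (b : ℝ) :
    HasRotationNumber (fun t ↦ f (t + b)) ω := by
  obtain ⟨θ, hθ, hangle, hturn⟩ := hω
  have hstep : ∀ t, ∃ n : ℤ, θ (t + 1) = θ t + 2 * π * n := fun t ↦ by
    have hnext := hangle (t + 1)
    rw [periodic_deriv hf] at hnext
    exact hnext.exists_eq_add_two_pi_mul_int (hd t) (hangle t)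
  choose n hn using hstep
  have hn_eq : (fun t ↦ (n t : ℝ)) = fun t ↦ (θ (t + 1) - θ t) / (2 * π) := by
    funext t
    rw [hn t, add_sub_cancel_left, mul_div_cancel_left₀ _ Real.two_pi_pos.ne']
  have hn_cont : Continuous n := by
    rw [Int.isClosedEmbedding_coe_real.isEmbedding.continuous_iff]
    change Continuous fun t ↦ (n t : ℝ)
    rw [hn_eq]
    fun_prop
  have hn_const : n b = n 0 := PreconnectedSpace.constant inferInstance hn_cont
  refine ⟨fun t ↦ θ (t + b), by fun_prop, fun t ↦ ?_, ?_⟩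
  · rw [deriv_comp_add_const]
    exact hangle (t + b)
  · have h0 := hn 0
    rw [zero_add] at h0
    simp only [zero_add, add_comm 1 b]
    rw [hn b, hn_const]
    linarith

theorem deriv_clm_comp {E F : Type*} [NormedAddCommGroup E] [NormedSpace ℝ E]
    [NormedAddCommGroup F] [NormedSpace ℝ F] (L : E →L[ℝ] F) {f : ℝ → E} {t : ℝ}
    (hf : DifferentiableAt ℝ f t) :
    deriv (L ∘ f) t = L (deriv f t) :=
  (L.hasFDerivAt.comp_hasDerivAt t hf.hasDerivAt).deriv

theorem HasRotationNumber.conj_comp {f : ℝ → ℂ} {ω : ℤ} (hω : HasRotationNumber f ω)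
    (hf : Differentiable ℝ f) : HasRotationNumber (Complex.conjCLE ∘ f) (-ω) := by
  obtain ⟨θ, hθ, hangle, hturn⟩ := hω
  refine ⟨fun t ↦ -θ t, hθ.neg, fun t ↦ ?_, by push_cast; linarith⟩
  rw [← ContinuousLinearEquiv.coe_coe, deriv_clm_comp _ (hf t)]
  exact (hangle t).map_conj

theorem HasRotationNumber.neg_comp {f : ℝ → ℂ} {ω : ℤ} (hω : HasRotationNumber f ω)
    (hf : Differentiable ℝ f) : HasRotationNumber (ContinuousLinearEquiv.neg ℝ ∘ f) ω := by
  obtain ⟨θ, hθ, hangle, hturn⟩ := hω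
  refine ⟨fun t ↦ θ t + π, hθ.add_const π, fun t ↦ ?_, by linarith⟩
  rw [← ContinuousLinearEquiv.coe_coe, deriv_clm_comp _ (hf t)]
  exact (hangle t).neg

theorem det2_map (L : ℂ →ₗ[ℝ] ℂ) (z w : ℂ) :
    det2 (L z) (L w) = det2 (L 1) (L Complex.I) * det2 z w := by
  have hL : ∀ z : ℂ, L z = z.re * L 1 + z.im * L Complex.I := fun z ↦ by
    calc L z = L (z.re • (1 : ℂ) + z.im • Complex.I) := by simp [Complex.re_add_im]
      _ = z.re * L 1 + z.im * L Complex.I := by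
        rw [map_add, map_smul, map_smul, Complex.real_smul, Complex.real_smul]
  rw [hL z, hL w]
  simp only [det2, Complex.add_re, Complex.add_im, Complex.re_ofReal_mul, Complex.im_ofReal_mul]
  ring

theorem det2_map_equiv_ne_zero (e : ℂ ≃ₗ[ℝ] ℂ) {z w : ℂ} (h : det2 z w ≠ 0) :
    det2 (e z) (e w) ≠ 0 := by
  have hdet := det2_map e.toLinearMap
  simp only [LinearEquiv.coe_coe] at hdet
  rw [hdet]
  refine mul_ne_zero (fun hzero ↦ ?_) h
  have hone := hdet (e.symm 1) (e.symm Complex.I)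
  rw [hzero] at hone
  simp [det2] at hone

theorem bijOn_fract_add (b : ℝ) :
    BijOn (fun t ↦ Int.fract (t + b)) (Ico 0 1) (Ico 0 1) := by
  have hmem : ∀ b : ℝ, MapsTo (fun t ↦ Int.fract (t + b)) (Ico 0 1) (Ico 0 1) :=
    fun b t _ ↦ ⟨Int.fract_nonneg _, Int.fract_lt_one _⟩
  have hinv : ∀ b : ℝ, LeftInvOn (fun t ↦ Int.fract (t + -b)) (fun t ↦ Int.fract (t + b))
      (Ico 0 1) := by
    intro b t ht
    refine Eq.trans (Int.fract_eq_fract.2 ⟨-⌊t + b⌋, ?_⟩) (Int.fract_eq_self.2 ht)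
    simp only [Int.fract]
    push_cast
    ring
  exact BijOn.mk (hmem b) (hinv b).injOn
    ((by simpa using hinv (-b) : RightInvOn (fun t ↦ Int.fract (t + -b)) _ _).surjOn (hmem (-b)))

theorem apply_fract_of_periodic {α : Type*} {f : ℝ → α} (hf : Function.Periodic f 1) (t : ℝ) :
    f (Int.fract t) = f t := by
  simpa using hf.sub_int_mul_eq (x := t) ⌊t⌋

namespace PlanarCurve

theorem multF_comp_add_const {f : ℝ → ℂ} (hf : Function.Periodic f 1) (b : ℝ) (p : ℂ) :
    multF (fun t ↦ f (t + b)) p = multF f p := by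
  have hbij := bijOn_fract_add b
  have himage : {t ∈ Ico (0 : ℝ) 1 | f t = p} =
      (fun t ↦ Int.fract (t + b)) '' {t ∈ Ico (0 : ℝ) 1 | f (t + b) = p} := by
    ext t
    constructor
    · rintro ⟨ht, hp⟩
      obtain ⟨s, hs, rfl⟩ := hbij.surjOn ht
      exact ⟨s, ⟨hs, by rwa [apply_fract_of_periodic hf] at hp⟩, rfl⟩
    · rintro ⟨s, ⟨hs, hp⟩, rfl⟩
      exact ⟨hbij.mapsTo hs, by rwa [apply_fract_of_periodic hf]⟩
  rw [multF, multF, himage, (hbij.injOn.mono fun t ht ↦ ht.1).ncard_image]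

theorem crossingSetF_comp_add_const {f : ℝ → ℂ} (hf : Function.Periodic f 1) (b : ℝ) :
    crossingSetF (fun t ↦ f (t + b)) = crossingSetF f := by
  simp only [crossingSetF, multF_comp_add_const hf]

theorem StableF.comp_add_const {f : ℝ → ℂ} (hst : StableF f) (hf : Function.Periodic f 1)
    (b : ℝ) : StableF (fun t ↦ f (t + b)) := by
  have hbij := bijOn_fract_add b
  refine ⟨by rw [crossingSetF_comp_add_const hf]; exact hst.1, fun p ↦ ?_⟩
  rw [multF_comp_add_const hf]
  refine ⟨(hst.2 p).1, fun hp s hs t ht hne hsp htp ↦ ?_⟩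
  have htrans := (hst.2 p).2 hp _ (hbij.mapsTo hs) _ (hbij.mapsTo ht)
    (hbij.injOn.ne hs ht hne)
  simp only [apply_fract_of_periodic hf,
    apply_fract_of_periodic (periodic_deriv hf)] at htrans
  rw [deriv_comp_add_const, deriv_comp_add_const]
  exact htrans hsp htp

theorem multF_comp {φ : ℂ → ℂ} (hφ : Function.Injective φ) (f : ℝ → ℂ) (p : ℂ) :
    multF (φ ∘ f) (φ p) = multF f p := by
  simp only [multF, Function.comp_apply, hφ.eq_iff]

theorem crossingSetF_comp (e : ℂ ≃ ℂ) (f : ℝ → ℂ) :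
    crossingSetF (e ∘ f) = e '' crossingSetF f := by
  ext q
  obtain ⟨p, rfl⟩ := e.surjective q
  rw [e.injective.mem_set_image, crossingSetF, crossingSetF, mem_ofPred_eq, mem_ofPred_eq,
    multF_comp e.injective]

theorem StableF.comp {f : ℝ → ℂ} (hst : StableF f) (hf : Differentiable ℝ f)
    (e : ℂ ≃L[ℝ] ℂ) : StableF (e ∘ f) := by
  refine ⟨(crossingSetF_comp e.toEquiv f).symm ▸ hst.1.image _, fun q ↦ ?_⟩
  obtain ⟨p, rfl⟩ := e.surjective q
  rw [multF_comp e.injective]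
  refine ⟨(hst.2 p).1, fun hp s hs t ht hne hsp htp ↦ ?_⟩
  have hderiv : ∀ t, deriv (e ∘ f) t = e (deriv f t) := fun t ↦
    deriv_clm_comp e.toContinuousLinearMap (hf t)
  rw [hderiv, hderiv]
  exact det2_map_equiv_ne_zero e.toLinearEquiv
    ((hst.2 p).2 hp s hs t ht hne (e.injective hsp) (e.injective htp))

theorem differentiable (c : PlanarCurve) : Differentiable ℝ c.toFun :=
  c.smooth.differentiable (by simp)

/-- The curve `c` with base point moved to the parameter `b`. -/
def shift (c : PlanarCurve) (b : ℝ) : PlanarCurve where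
  toFun t := c.toFun (t + b)
  periodic := c.periodic.add_const b
  smooth := c.smooth.comp (contDiff_id.add contDiff_const)
  immersion t := by rw [deriv_comp_add_const]; exact c.immersion _

/-- The image of the curve `c` under a linear automorphism of the plane. -/
def map (e : ℂ ≃L[ℝ] ℂ) (c : PlanarCurve) : PlanarCurve where
  toFun := e ∘ c.toFun
  periodic := c.periodic.comp e
  smooth := e.contDiff.comp c.smooth
  immersion t := by
    rw [← ContinuousLinearEquiv.coe_coe, deriv_clm_comp _ (c.differentiable t)]
    exact (map_ne_zero_iff e e.injective).2 (c.immersion t)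

theorem crossings_shift (c : PlanarCurve) (b : ℝ) : (c.shift b).crossings = c.crossings :=
  congrArg ncard (crossingSetF_comp_add_const c.periodic b)

theorem crossings_map (e : ℂ ≃L[ℝ] ℂ) (c : PlanarCurve) : (c.map e).crossings = c.crossings :=
  (congrArg ncard (crossingSetF_comp e.toEquiv c.toFun)).trans
    (ncard_image_of_injective _ e.injective)

/-! ### The lower bound -/

-- `ncard` of an infinite set is `0`, so finiteness of the fibres is what makes `multF` a count.
theorem finite_fiber (c : PlanarCurve) (p : ℂ) : {t ∈ Ico (0 : ℝ) 1 | c.toFun t = p}.Finite := by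
  by_contra hinf
  obtain ⟨x, -, hx⟩ := Set.Infinite.exists_accPt_of_subset_isCompact hinf
    (isCompact_Icc (a := (0 : ℝ)) (b := 1)) fun t ht ↦ Ico_subset_Icc_self ht.1
  rw [accPt_iff_frequently_nhdsNE] at hx
  have hne := (c.differentiable x).hasDerivAt.eventually_ne (c := p) (c.immersion x)
  obtain ⟨y, hy, hy'⟩ := (hx.and_eventually hne).exists
  exact hy' hy.2

theorem card_le_multF (c : PlanarCurve) {p : ℂ} {T : Finset ℝ}
    (hT : ∀ t ∈ T, t ∈ Ico (0 : ℝ) 1 ∧ c.toFun t = p) : T.card ≤ multF c.toFun p := by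
  rw [← ncard_coe_finset]
  exact ncard_le_ncard hT (c.finite_fiber p)

theorem two_le_multF (c : PlanarCurve) {s t : ℝ} (hs : 0 ≤ s) (hst : s < t) (ht : t < 1)
    (heq : c.toFun s = c.toFun t) : 2 ≤ multF c.toFun (c.toFun s) := by
  rw [← Finset.card_pair hst.ne]
  refine c.card_le_multF fun x hx ↦ ?_
  rcases Finset.mem_insert.1 hx with rfl | hx
  · exact ⟨⟨hs, hst.trans ht⟩, rfl⟩
  · rw [Finset.mem_singleton.1 hx]
    exact ⟨⟨hs.trans hst.le, ht⟩, heq.symm⟩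

theorem Stable.no_triple_point {c : PlanarCurve} (hst : c.Stable) {x y z : ℝ} (hx : 0 ≤ x)
    (hxy : x < y) (hyz : y < z) (hz : z < 1) (hy' : c.toFun x = c.toFun y) :
    c.toFun x ≠ c.toFun z := fun hz' ↦ by
  have hcard : ({x, y, z} : Finset ℝ).card ≤ multF c.toFun (c.toFun x) := by
    refine c.card_le_multF fun t ht ↦ ?_
    simp only [Finset.mem_insert, Finset.mem_singleton] at ht
    rcases ht with rfl | rfl | rfl
    · exact ⟨⟨hx, by linarith⟩, rfl⟩
    · exact ⟨⟨by linarith, by linarith⟩, hy'.symm⟩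
    · exact ⟨⟨by linarith, hz⟩, hz'.symm⟩
  rw [Finset.card_eq_three.2 ⟨x, y, z, hxy.ne, (hxy.trans hyz).ne, hyz.ne, rfl⟩] at hcard
  exact absurd (hst.2 (c.toFun x)).1 (by lia)

theorem exists_forall_im_le (c : PlanarCurve) : ∃ b, ∀ t, (c.toFun b).im ≤ (c.toFun t).im := by
  obtain ⟨b, -, hb⟩ := (isCompact_Icc (a := (0 : ℝ)) (b := 1)).exists_isMinOn
    (nonempty_Icc.2 zero_le_one) (Complex.continuous_im.comp c.smooth.continuous).continuousOn
  refine ⟨b, fun t ↦ ?_⟩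
  rw [← apply_fract_of_periodic c.periodic t]
  exact hb ⟨Int.fract_nonneg t, (Int.fract_lt_one t).le⟩

/-- A second visit to the lowest point would be tangent to the first one. -/
theorem Stable.isBottomBased {c : PlanarCurve} (hst : c.Stable)
    (hmin : ∀ t, (c.toFun 0).im ≤ (c.toFun t).im) (hre : 0 < (deriv c.toFun 0).re) :
    IsBottomBased c.toFun where
  periodic := c.periodic
  contDiff := c.smooth.of_le (by norm_cast)
  deriv_ne_zero := c.immersion
  re_deriv_pos := hre
  im_le := hmin
  ne_base t ht heq := by
    have hmult : multF c.toFun (c.toFun 0) = 2 :=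
      le_antisymm (hst.2 _).1 (c.two_le_multF le_rfl ht.1 ht.2 heq.symm)
    have htrans := (hst.2 _).2 hmult 0 (by simp) t (Ioo_subset_Ico_self ht) ht.1.ne rfl heq
    refine htrans ?_
    rw [det2, im_deriv_eq_zero_of_forall_im_le (c.differentiable 0) hmin,
      im_deriv_eq_zero_of_forall_im_le (c.differentiable t) (by rwa [heq]), mul_zero,
      zero_mul, sub_zero]

theorem mapsTo_firstVisits (c : PlanarCurve) :
    MapsTo c.toFun (firstVisits c.toFun) (crossingSetF c.toFun) := by
  rintro s ⟨hs, t, ht, heq⟩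
  exact c.two_le_multF hs.1.le ht.1 ht.2 heq

theorem Stable.injOn_firstVisits {c : PlanarCurve} (hst : c.Stable) :
    InjOn c.toFun (firstVisits c.toFun) := by
  intro s hs s' hs' heq
  wlog hle : s ≤ s' generalizing s s'
  · exact (this hs' hs heq.symm (le_of_not_ge hle)).symm
  obtain ⟨-, t, ht, heq'⟩ := hs'
  by_contra hne
  exact hst.no_triple_point hs.1.1.le (hle.lt_of_ne hne) ht.1 ht.2 heq (heq.trans heq')

theorem Stable.subsingleton_return {c : PlanarCurve} (hst : c.Stable) {s : ℝ} (hs : 0 ≤ s) :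
    {t ∈ Ioo s 1 | c.toFun s = c.toFun t}.Subsingleton := by
  rintro t ⟨ht, heq⟩ t' ⟨ht', heq'⟩
  wlog hle : t ≤ t' generalizing t t'
  · exact (this ht' heq' ht heq (le_of_not_ge hle)).symm
  by_contra hne
  exact hst.no_triple_point hs ht.1 (hle.lt_of_ne hne) ht'.2 heq heq'

theorem Stable.abs_one_sub_le_crossings {c : PlanarCurve} (hst : c.Stable)
    (hmin : ∀ t, (c.toFun 0).im ≤ (c.toFun t).im) (hre : 0 < (deriv c.toFun 0).re) {ω : ℤ}
    (hω : HasRotationNumber c.toFun ω) : |1 - ω| ≤ c.crossings := by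
  have hfin : (firstVisits c.toFun).Finite :=
    Finite.of_injOn c.mapsTo_firstVisits hst.injOn_firstVisits hst.1
  have hcard : (firstVisits c.toFun).ncard ≤ c.crossings :=
    ncard_le_ncard_of_injOn _ c.mapsTo_firstVisits hst.injOn_firstVisits hst.1
  exact ((hst.isBottomBased hmin hre).abs_one_sub_le_ncard_firstVisits hfin
    (fun s hs ↦ hst.subsingleton_return hs.1.1.le) hω).trans (by exact_mod_cast hcard)

/-- When the lowest point is passed from right to left, the mirror image of the curve in a vertical
line passes it from left to right, with opposite rotation number. -/
theorem Stable.natAbs_abs_sub_one_le_crossings {c : PlanarCurve} (hst : c.Stable) {ω : ℤ}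
    (hω : HasRotationNumber c.toFun ω) : (|ω| - 1).natAbs ≤ c.crossings := by
  obtain ⟨b, hb⟩ := c.exists_forall_im_le
  rw [← c.crossings_shift b]
  replace hω : HasRotationNumber (c.shift b).toFun ω :=
    hω.comp_add_const c.periodic c.immersion b
  replace hst : (c.shift b).Stable := StableF.comp_add_const hst c.periodic b
  have hmin : ∀ t, ((c.shift b).toFun 0).im ≤ ((c.shift b).toFun t).im := fun t ↦ by
    simpa only [shift, zero_add] using hb (t + b)
  generalize c.shift b = c at *
  have hre : (deriv c.toFun 0).re ≠ 0 := fun h ↦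
    c.immersion 0 (Complex.ext h (im_deriv_eq_zero_of_forall_im_le (c.differentiable 0) hmin))
  rcases hre.lt_or_gt with hneg | hpos
  · let mirror := Complex.conjCLE.trans (ContinuousLinearEquiv.neg ℝ)
    have hderiv : deriv (c.map mirror).toFun 0 = -conj (deriv c.toFun 0) :=
      deriv_clm_comp mirror.toContinuousLinearMap (c.differentiable 0)
    have hbound := Stable.abs_one_sub_le_crossings (c := c.map mirror) (ω := -ω)
      (hst.comp c.differentiable mirror) (fun t ↦ by simpa [map, mirror] using hmin t)
      (by simpa [hderiv] using hneg)
      ((hω.conj_comp c.differentiable).neg_comp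
        (Complex.conjCLE.toContinuousLinearMap.differentiable.comp c.differentiable))
    rw [crossings_map] at hbound
    grind
  · have hbound := hst.abs_one_sub_le_crossings hmin hpos hω
    grind

end PlanarCurve

/-! ### Curves with prescribed double points -/

theorem det2_swap (z w : ℂ) : det2 w z = -det2 z w := by
  unfold det2; ring

/-- The points of `T` are transverse double points of the curve `f` of period `1`, which is
injective elsewhere on `[0, 1)`. -/
structure IsDoublePointSet (f : ℝ → ℂ) (T : Finset ℂ) : Prop where
  mem_of_apply_eq : ∀ s ∈ Ico (0 : ℝ) 1, ∀ t ∈ Ico (0 : ℝ) 1, s ≠ t → f s = f t → f s ∈ T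
  exists_fiber_eq_pair : ∀ p ∈ T, ∃ s t, s ≠ t ∧ {u ∈ Ico (0 : ℝ) 1 | f u = p} = {s, t} ∧
    det2 (deriv f s) (deriv f t) ≠ 0

namespace IsDoublePointSet

open PlanarCurve

variable {f : ℝ → ℂ} {T : Finset ℂ} (hT : IsDoublePointSet f T)

include hT

theorem multF_le_one {p : ℂ} (hp : p ∉ T) : multF f p ≤ 1 := by
  have hsub : {u ∈ Ico (0 : ℝ) 1 | f u = p}.Subsingleton := by
    intro s hs t ht
    by_contra hst
    exact hp (hs.2 ▸ hT.mem_of_apply_eq s hs.1 t ht.1 hst (hs.2.trans ht.2.symm))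
  have := hsub.finite.to_subtype
  exact ncard_le_one_iff_subsingleton.2 hsub

theorem multF_eq_two {p : ℂ} (hp : p ∈ T) : multF f p = 2 := by
  obtain ⟨s, t, hst, hfiber, -⟩ := hT.exists_fiber_eq_pair p hp
  rw [multF, hfiber, ncard_pair hst]

theorem transverseF {p : ℂ} (hp : p ∈ T) : TransverseF f p := by
  obtain ⟨s, t, -, hfiber, htrans⟩ := hT.exists_fiber_eq_pair p hp
  intro s' hs' t' ht' hne hsp htp
  have hs : s' ∈ ({s, t} : Set ℝ) := hfiber ▸ ⟨hs', hsp⟩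
  have ht : t' ∈ ({s, t} : Set ℝ) := hfiber ▸ ⟨ht', htp⟩
  rcases hs with rfl | rfl <;> rcases ht with rfl | rfl
  · exact absurd rfl hne
  · exact htrans
  · rwa [det2_swap, neg_ne_zero]
  · exact absurd rfl hne

theorem crossingSetF_eq : crossingSetF f = T := by
  ext p
  by_cases hp : p ∈ T
  · simp [crossingSetF, hT.multF_eq_two hp, hp]
  · have := hT.multF_le_one hp
    simp only [crossingSetF, mem_ofPred_eq, Finset.mem_coe, hp, iff_false]
    lia

theorem stableF : StableF f := by
  refine ⟨hT.crossingSetF_eq ▸ T.finite_toSet, fun p ↦ ?_⟩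
  by_cases hp : p ∈ T
  · exact ⟨(hT.multF_eq_two hp).le, fun _ ↦ hT.transverseF hp⟩
  · have := hT.multF_le_one hp
    exact ⟨by lia, fun _ ↦ by lia⟩

theorem ncard_crossingSetF : (crossingSetF f).ncard = T.card := by
  rw [hT.crossingSetF_eq, ncard_coe_finset]

end IsDoublePointSet

/-! ### The angle of the loops of `δ_m` -/

section LoopAngle

variable {m d : ℝ}

theorem sin_mul_pos (hm : 0 < m) (hd : d ∈ Ioo 0 (π / m)) : 0 < Real.sin (m * d) :=
  Real.sin_pos_of_pos_of_lt_pi (mul_pos hm hd.1) (by rw [mul_comm]; exact (lt_div_iff₀ hm).1 hd.2)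

theorem sin_pos_of_mem_Ioo_pi_div (hm : 1 ≤ m) (hd : d ∈ Ioo 0 (π / m)) : 0 < Real.sin d :=
  Real.sin_pos_of_pos_of_lt_pi hd.1 (hd.2.trans_le (div_le_self Real.pi_pos.le hm))

theorem mul_cos_mul_sin_lt (hm : 1 < m) (hd : d ∈ Ioo 0 (π / m)) :
    m * Real.cos (m * d) * Real.sin d < Real.sin (m * d) * Real.cos d := by
  have hderiv : ∀ x, HasDerivAt
      (fun d ↦ m * Real.cos (m * d) * Real.sin d - Real.sin (m * d) * Real.cos d)
      ((1 - m ^ 2) * (Real.sin (m * x) * Real.sin x)) x := fun x ↦ by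
    have hmul : HasDerivAt (fun d ↦ m * d) m x := hasDerivAt_const_mul m
    refine (((hmul.cos.const_mul m).mul (Real.hasDerivAt_sin x)).sub
      (hmul.sin.mul (Real.hasDerivAt_cos x))).congr_deriv ?_
    ring
  have hanti : StrictAntiOn
      (fun d ↦ m * Real.cos (m * d) * Real.sin d - Real.sin (m * d) * Real.cos d)
      (Icc 0 (π / m)) := by
    refine strictAntiOn_of_deriv_neg (convex_Icc _ _) (by fun_prop) fun x hx ↦ ?_
    rw [interior_Icc] at hx
    rw [(hderiv x).deriv]
    exact mul_neg_of_neg_of_pos (by nlinarith)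
      (mul_pos (sin_mul_pos (by linarith) hx) (sin_pos_of_mem_Ioo_pi_div hm.le hx))
  have hlt := hanti (left_mem_Icc.2 (hd.1.trans hd.2).le) (Ioo_subset_Icc_self hd) hd.1
  simpa using hlt

theorem strictAntiOn_sin_mul_div_sin (hm : 1 < m) :
    StrictAntiOn (fun d ↦ Real.sin (m * d) / Real.sin d) (Ioo 0 (π / m)) := by
  have hderiv : ∀ x ∈ Ioo 0 (π / m), HasDerivAt (fun d ↦ Real.sin (m * d) / Real.sin d)
      ((m * Real.cos (m * x) * Real.sin x - Real.sin (m * x) * Real.cos x) / Real.sin x ^ 2) x := by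
    intro x hx
    refine ((hasDerivAt_const_mul m).sin.div (Real.hasDerivAt_sin x)
      (sin_pos_of_mem_Ioo_pi_div hm.le hx).ne').congr_deriv ?_
    ring
  refine strictAntiOn_of_deriv_neg (convex_Ioo _ _)
    (fun x hx ↦ (hderiv x hx).continuousAt.continuousWithinAt) fun x hx ↦ ?_
  rw [interior_Ioo] at hx
  rw [(hderiv x hx).deriv]
  exact div_neg_of_neg_of_pos (sub_neg.2 (mul_cos_mul_sin_lt hm hx))
    (pow_pos (sin_pos_of_mem_Ioo_pi_div hm.le hx) 2)

/-- Half the angle, seen from the centre, between the two parameters of a crossing of the curve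
`z ^ m + (2 * m / 3) * z`, `‖z‖ = 1`. -/
structure IsLoopAngle (m d : ℝ) : Prop where
  mem_Ioo : d ∈ Ioo 0 (π / m)
  sin_mul_eq : Real.sin (m * d) = 2 * m / 3 * Real.sin d

theorem exists_isLoopAngle (hm : 1 < m) : ∃ d, IsLoopAngle m d := by
  have hm₀ : 0 < m := by linarith
  have hneg : Real.sin (m * (π / m)) - 2 * m / 3 * Real.sin (π / m) < 0 := by
    have hsin : 0 < Real.sin (π / m) :=
      Real.sin_pos_of_pos_of_lt_pi (by positivity) (div_lt_self Real.pi_pos hm)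
    rw [mul_div_cancel₀ _ hm₀.ne', Real.sin_pi, zero_sub]
    exact neg_neg_of_pos (by positivity)
  have hpos : 0 < Real.sin (m * (1 / m)) - 2 * m / 3 * Real.sin (1 / m) := by
    have hsin_one := Real.sin_gt_sub_cube (x := 1) one_pos
    rw [mul_div_cancel₀ _ hm₀.ne', sub_pos]
    calc 2 * m / 3 * Real.sin (1 / m) ≤ 2 * m / 3 * (1 / m) := by
          gcongr
          exact Real.sin_le (by positivity)
      _ = 2 / 3 := by field_simp
      _ < Real.sin 1 := by linarith
  obtain ⟨d, hd, hzero⟩ := intermediate_value_Ioo'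
    (f := fun d ↦ Real.sin (m * d) - 2 * m / 3 * Real.sin d)
    (show 1 / m ≤ π / m by gcongr; linarith [Real.pi_gt_three]) (by fun_prop) ⟨hneg, hpos⟩
  exact ⟨d, ⟨(one_div_pos.2 hm₀).trans hd.1, hd.2⟩, sub_eq_zero.1 hzero⟩

namespace IsLoopAngle

theorem unique {d' : ℝ} (hm : 1 < m) (hd : IsLoopAngle m d) (hd' : IsLoopAngle m d') : d = d' := by
  have hratio : ∀ {x}, IsLoopAngle m x → Real.sin (m * x) / Real.sin x = 2 * m / 3 := fun hx ↦ by
    rw [hx.sin_mul_eq, mul_div_cancel_right₀ _ (sin_pos_of_mem_Ioo_pi_div hm.le hx.mem_Ioo).ne']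
  exact (strictAntiOn_sin_mul_div_sin hm).injOn hd.mem_Ioo hd'.mem_Ioo
    ((hratio hd).trans (hratio hd').symm)

theorem of_abs_sin_mul_eq (hm : 0 < m) (hpos : 0 < d) (hle : d ≤ π / 2)
    (heq : |Real.sin (m * d)| = 2 * m / 3 * Real.sin d) : IsLoopAngle m d := by
  have hlt : d < π / m := by
    by_contra! hge
    have hjordan : 2 / π * (π / m) ≤ Real.sin d :=
      (mul_le_mul_of_nonneg_left hge (by positivity)).trans (Real.mul_le_sin hpos.le hle)
    have : 4 / 3 ≤ (1 : ℝ) := calc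
      4 / 3 = 2 * m / 3 * (2 / π * (π / m)) := by field_simp; norm_num
      _ ≤ 2 * m / 3 * Real.sin d := by gcongr
      _ ≤ 1 := heq ▸ Real.abs_sin_le_one _
    norm_num at this
  exact ⟨⟨hpos, hlt⟩, by rwa [abs_of_pos (sin_mul_pos hm ⟨hpos, hlt⟩)] at heq⟩

theorem abs_eq {x : ℝ} (hm : 1 < m) (hd : IsLoopAngle m d) (hx : x ≠ 0) (hle : |x| ≤ π / 2)
    (heq : |Real.sin (m * x)| = |2 * m / 3 * Real.sin x|) : |x| = d := by
  have hsin : |Real.sin x| = Real.sin |x| :=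
    Real.abs_sin_eq_sin_abs_of_abs_le_pi (hle.trans (by linarith [Real.pi_pos]))
  have hsin_mul : |Real.sin (m * |x|)| = |Real.sin (m * x)| := by
    rcases abs_choice x with h | h <;> rw [h]
    rw [mul_neg, Real.sin_neg, abs_neg]
  refine unique hm (of_abs_sin_mul_eq (by linarith) (abs_pos.2 hx) hle ?_) hd
  rw [hsin_mul, heq, abs_mul, hsin, abs_of_pos (by linarith)]

end IsLoopAngle

end LoopAngle

/-! ### The curves `δ_m`, `m ≥ 1` -/

/-- The parametrization of the unit circle by `[0, 1)`. -/
def unitCircle (t : ℝ) : ℂ := Complex.exp (((2 * π * t : ℝ) : ℂ) * Complex.I)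

theorem norm_unitCircle (t : ℝ) : ‖unitCircle t‖ = 1 := Complex.norm_exp_ofReal_mul_I _

theorem injOn_unitCircle : InjOn unitCircle (Ico 0 1) := by
  intro s hs t ht hst
  have hmem : ∀ {x : ℝ}, x ∈ Ico (0 : ℝ) 1 → 2 * π * x ∈ Ico 0 (2 * π) := fun {x} hx ↦
    ⟨mul_nonneg Real.two_pi_pos.le hx.1, mul_lt_of_lt_one_right Real.two_pi_pos hx.2⟩
  exact mul_left_cancel₀ Real.two_pi_pos.ne'
    (Circle.exp_injOn_Ico (by simp) (hmem hs) (hmem ht) (Subtype.ext hst))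

theorem exists_unitCircle_eq {z : ℂ} (hz : ‖z‖ = 1) : ∃ t ∈ Ico (0 : ℝ) 1, unitCircle t = z := by
  refine ⟨Int.fract (z.arg / (2 * π)), ⟨Int.fract_nonneg _, Int.fract_lt_one _⟩, ?_⟩
  have harg : Complex.exp (z.arg * Complex.I) = z := by
    simpa [hz] using Complex.norm_mul_exp_arg_mul_I z
  rw [← harg, unitCircle, Complex.exp_eq_exp_iff_exists_int]
  refine ⟨-⌊z.arg / (2 * π)⌋, ?_⟩
  have hpi : (π : ℂ) ≠ 0 := Complex.ofReal_ne_zero.2 Real.pi_ne_zero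
  rw [harg, Int.fract]
  push_cast
  field_simp
  ring

theorem hasDerivAt_unitCircle (t : ℝ) :
    HasDerivAt unitCircle (2 * π * Complex.I * unitCircle t) t := by
  have hlin : HasDerivAt (fun t : ℝ ↦ 2 * π * t) (2 * π) t := hasDerivAt_const_mul _
  refine (hlin.ofReal_comp.mul_const Complex.I).cexp.congr_deriv ?_
  rw [unitCircle]
  push_cast
  ring

theorem unitCircle_pow (n : ℕ) (t : ℝ) :
    unitCircle t ^ n = Complex.exp (((2 * π * n * t : ℝ) : ℂ) * Complex.I) := by
  rw [unitCircle, ← Complex.exp_nat_mul]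
  congr 1
  push_cast
  ring

theorem exists_eq_mul_exp_and_eq_mul_conj {z w : ℂ} (hz : ‖z‖ = 1) (hw : ‖w‖ = 1) (h : z ≠ w) :
    ∃ (q : ℂ) (d : ℝ), ‖q‖ = 1 ∧ d ≠ 0 ∧ |d| ≤ π / 2 ∧
      z = q * Complex.exp (d * Complex.I) ∧ w = q * conj (Complex.exp (d * Complex.I)) := by
  have hw₀ : w ≠ 0 := norm_ne_zero_iff.1 (by simp [hw])
  set d : ℝ := (z / w).arg / 2 with hd
  have hsq : z = w * Complex.exp (d * Complex.I) * Complex.exp (d * Complex.I) := by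
    have hnorm := Complex.norm_mul_exp_arg_mul_I (z / w)
    rw [norm_div, hz, hw, div_one, Complex.ofReal_one, one_mul, eq_div_iff hw₀] at hnorm
    rw [mul_assoc, ← Complex.exp_add, ← hnorm, mul_comm, hd]
    push_cast
    ring_nf
  refine ⟨w * Complex.exp (d * Complex.I), d, ?_, fun h₀ ↦ h ?_, ?_, hsq, ?_⟩
  · rw [norm_mul, hw, Complex.norm_exp_ofReal_mul_I, one_mul]
  · simpa [h₀] using hsq
  · rw [hd, abs_div, abs_two]
    gcongr
    exact Complex.abs_arg_le_pi _
  · rw [mul_assoc, Complex.mul_conj, Complex.normSq_eq_norm_sq, Complex.norm_exp_ofReal_mul_I]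
    simp

theorem exp_mul_I_pow_re (d : ℝ) (n : ℕ) :
    (Complex.exp (d * Complex.I) ^ n).re = Real.cos (n * d) := by
  rw [← Complex.exp_ofReal_mul_I_re, ← Complex.exp_nat_mul]
  push_cast
  ring_nf

theorem exp_mul_I_pow_im (d : ℝ) (n : ℕ) :
    (Complex.exp (d * Complex.I) ^ n).im = Real.sin (n * d) := by
  rw [← Complex.exp_ofReal_mul_I_im, ← Complex.exp_nat_mul]
  push_cast
  ring_nf

theorem det2_mul_mul_conj (a z : ℂ) :
    det2 (a * z) (a * conj z) = -2 * Complex.normSq a * (z.re * z.im) := by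
  simp only [det2, Complex.mul_re, Complex.mul_im, Complex.conj_re, Complex.conj_im,
    Complex.normSq_apply]
  ring

/-- The map whose restriction to the unit circle is the curve `δ_m`. -/
def loopMap (m : ℕ) (z : ℂ) : ℂ := z ^ m + ((2 * m / 3 : ℝ) : ℂ) * z

theorem deltaFunPos_eq (m : ℕ) (t : ℝ) :
    PlanarCurve.deltaFunPos m t = loopMap m (unitCircle t) := by
  rw [loopMap, unitCircle_pow]
  rfl

theorem hasDerivAt_deltaFunPos (k : ℕ) (t : ℝ) :
    HasDerivAt (PlanarCurve.deltaFunPos (k + 1)) (2 * π * (k + 1) * Complex.I *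
      (unitCircle t ^ (k + 1) + 2 / 3 * unitCircle t)) t := by
  have hcircle := hasDerivAt_unitCircle t
  rw [funext (deltaFunPos_eq (k + 1))]
  refine ((hcircle.pow (k + 1)).add (hcircle.const_mul _)).congr_deriv ?_
  push_cast
  ring

theorem im_pow_eq_of_loopMap_eq {k : ℕ} {q κ : ℂ} (hq : q ≠ 0)
    (h : loopMap (k + 1) (q * κ) = loopMap (k + 1) (q * conj κ)) :
    q ^ k * ((κ ^ (k + 1)).im : ℂ) = -((2 * (k + 1 : ℕ) / 3 * κ.im : ℝ) : ℂ) := by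
  have hpow := Complex.sub_conj (κ ^ (k + 1))
  have hlin := Complex.sub_conj κ
  rw [map_pow] at hpow
  have hfactor : 2 * q * Complex.I *
      (q ^ k * ((κ ^ (k + 1)).im : ℂ) + ((2 * (k + 1 : ℕ) / 3 * κ.im : ℝ) : ℂ)) = 0 := by
    rw [loopMap, loopMap, mul_pow, mul_pow] at h
    push_cast at h hpow hlin ⊢
    linear_combination h - q ^ (k + 1) * hpow - 2 * (k + 1) / 3 * q * hlin
  exact eq_neg_of_add_eq_zero_left ((mul_eq_zero.1 hfactor).resolve_left (by simp [hq]))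

/-- The signed distance to the origin of the crossings of `δ_m`, for a loop angle `d`: the crossing
with parameters `q * exp (± i d)` is the point `loopRadius m d * q`. -/
def loopRadius (m d : ℝ) : ℝ := 2 * m / 3 * Real.cos d - Real.cos (m * d)

theorem loopMap_mul_of_pow_eq_neg_one {k : ℕ} {q : ℂ} (hq : q ^ k = -1) (z : ℂ) :
    loopMap (k + 1) (q * z) = q * (((2 * (k + 1 : ℕ) / 3 : ℝ) : ℂ) * z - z ^ (k + 1)) := by
  rw [loopMap, mul_pow, pow_succ q, hq]
  ring

theorem norm_eq_one_of_pow_eq_neg_one {k : ℕ} (hk : k ≠ 0) {q : ℂ} (hq : q ^ k = -1) :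
    ‖q‖ = 1 :=
  (pow_eq_one_iff_of_nonneg (norm_nonneg q) hk).1 (by rw [← norm_pow, hq, norm_neg, norm_one])

namespace IsLoopAngle

variable {k : ℕ} {d : ℝ} {q z w : ℂ}

theorem mul_exp_sub_pow_eq {m : ℕ} (hd : IsLoopAngle m d) :
    ((2 * m / 3 : ℝ) : ℂ) * Complex.exp (d * Complex.I) - Complex.exp (d * Complex.I) ^ m =
      loopRadius m d := by
  apply Complex.ext
  · rw [Complex.sub_re, Complex.re_ofReal_mul, exp_mul_I_pow_re, Complex.exp_ofReal_mul_I_re]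
    rfl
  · rw [Complex.sub_im, Complex.im_ofReal_mul, exp_mul_I_pow_im, Complex.exp_ofReal_mul_I_im,
      hd.sin_mul_eq, sub_self, Complex.ofReal_im]

theorem loopMap_mul_exp (hd : IsLoopAngle (k + 1 : ℕ) d) (hq : q ^ k = -1) :
    loopMap (k + 1) (q * Complex.exp (d * Complex.I)) = loopRadius (k + 1 : ℕ) d * q := by
  rw [loopMap_mul_of_pow_eq_neg_one hq, hd.mul_exp_sub_pow_eq, mul_comm]

theorem loopMap_mul_conj_exp (hd : IsLoopAngle (k + 1 : ℕ) d) (hq : q ^ k = -1) :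
    loopMap (k + 1) (q * conj (Complex.exp (d * Complex.I))) = loopRadius (k + 1 : ℕ) d * q := by
  rw [loopMap_mul_of_pow_eq_neg_one hq, ← map_pow, ← Complex.conj_ofReal, ← map_mul, ← map_sub,
    hd.mul_exp_sub_pow_eq, Complex.conj_ofReal, mul_comm]

theorem loopRadius_ne_zero {m : ℝ} (hm : 3 / 2 < m) (hd : IsLoopAngle m d) :
    loopRadius m d ≠ 0 := by
  intro hzero
  have hone : (2 * m / 3) ^ 2 = 1 := calc
    (2 * m / 3) ^ 2 = (2 * m / 3) ^ 2 * (Real.sin d ^ 2 + Real.cos d ^ 2) := by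
      rw [Real.sin_sq_add_cos_sq, mul_one]
    _ = Real.sin (m * d) ^ 2 + Real.cos (m * d) ^ 2 := by
      rw [hd.sin_mul_eq, ← sub_eq_zero.1 hzero]; ring
    _ = 1 := Real.sin_sq_add_cos_sq _
  nlinarith

theorem exists_pow_eq_neg_one_of_loopMap_eq (hk : k ≠ 0) (hd : IsLoopAngle (k + 1 : ℕ) d)
    (hz : ‖z‖ = 1) (hw : ‖w‖ = 1) (hzw : z ≠ w) (heq : loopMap (k + 1) z = loopMap (k + 1) w) :
    ∃ q : ℂ, q ^ k = -1 ∧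
      ((z = q * Complex.exp (d * Complex.I) ∧ w = q * conj (Complex.exp (d * Complex.I))) ∨
        (z = q * conj (Complex.exp (d * Complex.I)) ∧ w = q * Complex.exp (d * Complex.I))) := by
  have hm : (1 : ℝ) < (k + 1 : ℕ) := by exact_mod_cast Nat.succ_lt_succ (Nat.pos_of_ne_zero hk)
  obtain ⟨q, x, hq, hx, hx_le, rfl, rfl⟩ := exists_eq_mul_exp_and_eq_mul_conj hz hw hzw
  have him := im_pow_eq_of_loopMap_eq (norm_ne_zero_iff.1 (by simp [hq])) heq
  rw [exp_mul_I_pow_im, Complex.exp_ofReal_mul_I_im] at him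
  have hxd : |x| = d := by
    refine hd.abs_eq hm hx hx_le ?_
    simpa only [norm_mul, norm_pow, hq, one_pow, one_mul, norm_neg, Complex.norm_real,
      Real.norm_eq_abs, abs_mul] using congrArg norm him
  have hsin : ((2 * (k + 1 : ℕ) / 3 * Real.sin d : ℝ) : ℂ) ≠ 0 := Complex.ofReal_ne_zero.2
    (mul_pos (by positivity) (sin_pos_of_mem_Ioo_pi_div hm.le hd.mem_Ioo)).ne'
  refine ⟨q, mul_right_cancel₀ hsin ?_, ?_⟩
  all_goals rcases eq_or_eq_neg_of_abs_eq hxd with rfl | rfl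
  · rw [← hd.sin_mul_eq, him, hd.sin_mul_eq, neg_one_mul]
  · rw [mul_neg, Real.sin_neg, Real.sin_neg, hd.sin_mul_eq, mul_neg, Complex.ofReal_neg, mul_neg,
      neg_inj] at him
    rw [him, neg_one_mul]
  · exact Or.inl ⟨rfl, rfl⟩
  · exact Or.inr (by simp [← Complex.exp_conj])

theorem loopMap_eq_iff (hk : k ≠ 0) (hd : IsLoopAngle (k + 1 : ℕ) d) (hq : q ^ k = -1)
    (hz : ‖z‖ = 1) : loopMap (k + 1) z = loopRadius (k + 1 : ℕ) d * q ↔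
      z = q * Complex.exp (d * Complex.I) ∨ z = q * conj (Complex.exp (d * Complex.I)) := by
  refine ⟨fun hzq ↦ or_iff_not_imp_left.2 fun hne ↦ ?_, ?_⟩
  · have hm : (3 / 2 : ℝ) < (k + 1 : ℕ) := by
      have : (1 : ℝ) ≤ k := Nat.one_le_cast.2 (Nat.one_le_iff_ne_zero.2 hk)
      push_cast
      linarith
    have hnorm : ‖q * Complex.exp (d * Complex.I)‖ = 1 := by
      rw [norm_mul, norm_eq_one_of_pow_eq_neg_one hk hq, Complex.norm_exp_ofReal_mul_I, one_mul]
    have heq := (hd.loopMap_mul_exp hq).trans hzq.symm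
    obtain ⟨r, hr, hpair⟩ :=
      hd.exists_pow_eq_neg_one_of_loopMap_eq hk hz hnorm hne heq.symm
    have hrq : r = q := by
      refine mul_left_cancel₀ (Complex.ofReal_ne_zero.2 (hd.loopRadius_ne_zero hm)) ?_
      rcases hpair with ⟨rfl, -⟩ | ⟨rfl, -⟩
      · rw [← hzq, hd.loopMap_mul_exp hr]
      · rw [← hzq, hd.loopMap_mul_conj_exp hr]
    rcases hpair with ⟨rfl, -⟩ | ⟨rfl, -⟩
    · exact absurd (by rw [hrq]) hne
    · rw [hrq]
  · rintro (rfl | rfl)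
    · exact hd.loopMap_mul_exp hq
    · exact hd.loopMap_mul_conj_exp hq

theorem det2_deriv_deltaFunPos_ne_zero {s t : ℝ} (hk : k ≠ 0) (hd : IsLoopAngle (k + 1 : ℕ) d)
    (hq : q ^ k = -1) (hs : unitCircle s = q * Complex.exp (d * Complex.I))
    (ht : unitCircle t = q * conj (Complex.exp (d * Complex.I))) :
    det2 (deriv (PlanarCurve.deltaFunPos (k + 1)) s)
      (deriv (PlanarCurve.deltaFunPos (k + 1)) t) ≠ 0 := by
  have hm : (1 : ℝ) < (k + 1 : ℕ) := by exact_mod_cast Nat.succ_lt_succ (Nat.pos_of_ne_zero hk)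
  set κ := Complex.exp (d * Complex.I) with hκ
  set a : ℂ := 2 * π * (k + 1) * Complex.I * q with ha
  set ζ : ℂ := ((2 / 3 : ℝ) : ℂ) * κ - κ ^ (k + 1) with hζ
  have hderiv : ∀ {u z}, unitCircle u = q * z → deriv (PlanarCurve.deltaFunPos (k + 1)) u =
      a * (((2 / 3 : ℝ) : ℂ) * z - z ^ (k + 1)) := by
    intro u z hu
    rw [(hasDerivAt_deltaFunPos k u).deriv, hu, mul_pow, pow_succ q, hq, ha]
    push_cast
    ring
  have ha₀ : a ≠ 0 := by
    have hq₀ : q ≠ 0 := norm_ne_zero_iff.1 (by simp [norm_eq_one_of_pow_eq_neg_one hk hq])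
    simp [ha, hq₀, Real.pi_ne_zero, Nat.cast_add_one_ne_zero]
  have hre : ζ.re ≠ 0 := by
    have hlt := mul_cos_mul_sin_lt hm hd.mem_Ioo
    rw [hζ, Complex.sub_re, Complex.re_ofReal_mul, hκ, exp_mul_I_pow_re,
      Complex.exp_ofReal_mul_I_re]
    intro hzero
    rw [← sub_eq_zero.1 hzero, hd.sin_mul_eq] at hlt
    linarith
  have him : ζ.im ≠ 0 := by
    have hsin := sin_pos_of_mem_Ioo_pi_div hm.le hd.mem_Ioo
    rw [hζ, Complex.sub_im, Complex.im_ofReal_mul, hκ, exp_mul_I_pow_im,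
      Complex.exp_ofReal_mul_I_im, hd.sin_mul_eq, ← sub_mul]
    exact mul_ne_zero (by linarith) hsin.ne'
  have hconj : ((2 / 3 : ℝ) : ℂ) * conj κ - conj κ ^ (k + 1) = conj ζ := by
    rw [hζ, map_sub, map_mul, map_pow, Complex.conj_ofReal]
  rw [hderiv hs, hderiv ht, hconj, det2_mul_mul_conj]
  exact mul_ne_zero (mul_ne_zero (by norm_num) (Complex.normSq_eq_zero.not.2 ha₀))
    (mul_ne_zero hre him)

theorem exists_fiber_deltaFunPos_eq_pair (hk : k ≠ 0) (hd : IsLoopAngle (k + 1 : ℕ) d)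
    (hq : q ^ k = -1) : ∃ s t, s ≠ t ∧
      {u ∈ Ico (0 : ℝ) 1 | PlanarCurve.deltaFunPos (k + 1) u = loopRadius (k + 1 : ℕ) d * q} =
        {s, t} ∧
      det2 (deriv (PlanarCurve.deltaFunPos (k + 1)) s)
        (deriv (PlanarCurve.deltaFunPos (k + 1)) t) ≠ 0 := by
  have hnorm := norm_eq_one_of_pow_eq_neg_one hk hq
  have hexp := Complex.norm_exp_ofReal_mul_I d
  obtain ⟨s, hs, hsq⟩ := exists_unitCircle_eq (z := q * Complex.exp (d * Complex.I))
    (by rw [norm_mul, hnorm, hexp, one_mul])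
  obtain ⟨t, ht, htq⟩ := exists_unitCircle_eq (z := q * conj (Complex.exp (d * Complex.I)))
    (by rw [norm_mul, hnorm, RCLike.norm_conj, hexp, one_mul])
  have htrans := hd.det2_deriv_deltaFunPos_ne_zero hk hq hsq htq
  refine ⟨s, t, ?_, ?_, htrans⟩
  · rintro rfl
    exact htrans (by rw [det2]; ring)
  · ext u
    rw [mem_sep_iff, deltaFunPos_eq]
    constructor
    · rintro ⟨hu, huq⟩
      rw [hd.loopMap_eq_iff hk hq (norm_unitCircle u), ← hsq, ← htq] at huq
      exact huq.imp (injOn_unitCircle hu hs) (injOn_unitCircle hu ht)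
    · rintro (rfl | rfl)
      · exact ⟨hs, hsq ▸ hd.loopMap_mul_exp hq⟩
      · exact ⟨ht, htq ▸ hd.loopMap_mul_conj_exp hq⟩

theorem isDoublePointSet_deltaFunPos (hk : k ≠ 0) (hd : IsLoopAngle (k + 1 : ℕ) d) :
    IsDoublePointSet (PlanarCurve.deltaFunPos (k + 1))
      ((Polynomial.nthRootsFinset k (-1 : ℂ)).image (loopRadius (k + 1 : ℕ) d * ·)) where
  mem_of_apply_eq s hs t ht hst heq := by
    rw [deltaFunPos_eq, deltaFunPos_eq] at heq
    obtain ⟨q, hq, hpair⟩ := hd.exists_pow_eq_neg_one_of_loopMap_eq hk (norm_unitCircle s)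
      (norm_unitCircle t) (injOn_unitCircle.ne hs ht hst) heq
    refine Finset.mem_image.2
      ⟨q, (Polynomial.mem_nthRootsFinset (Nat.pos_of_ne_zero hk) _).2 hq, ?_⟩
    rw [deltaFunPos_eq]
    rcases hpair with ⟨h, -⟩ | ⟨h, -⟩ <;> rw [h]
    · exact (hd.loopMap_mul_exp hq).symm
    · exact (hd.loopMap_mul_conj_exp hq).symm
  exists_fiber_eq_pair p hp := by
    obtain ⟨q, hq, rfl⟩ := Finset.mem_image.1 hp
    exact hd.exists_fiber_deltaFunPos_eq_pair hk
      ((Polynomial.mem_nthRootsFinset (Nat.pos_of_ne_zero hk) _).1 hq)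

end IsLoopAngle

theorem card_nthRootsFinset_of_ne_zero {k : ℕ} (hk : k ≠ 0) {a : ℂ} (ha : a ≠ 0) :
    (Polynomial.nthRootsFinset k a).card = k := by
  have hprim := Complex.isPrimitiveRoot_exp k hk
  rw [Polynomial.nthRootsFinset, Multiset.toFinset_card_of_nodup (hprim.nthRoots_nodup ha),
    hprim.card_nthRoots, if_pos (IsAlgClosed.exists_pow_nat_eq a (Nat.pos_of_ne_zero hk))]

theorem isDoublePointSet_deltaFunPos_one : IsDoublePointSet (PlanarCurve.deltaFunPos 1) ∅ where
  mem_of_apply_eq s hs t ht hst heq := by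
    refine absurd (injOn_unitCircle hs ht ?_) hst
    rw [deltaFunPos_eq, deltaFunPos_eq, loopMap, loopMap] at heq
    push_cast at heq
    linear_combination 3 / 5 * heq
  exists_fiber_eq_pair p hp := absurd hp (Finset.notMem_empty p)

theorem exists_isDoublePointSet_deltaFunPos (k : ℕ) :
    ∃ T : Finset ℂ, IsDoublePointSet (PlanarCurve.deltaFunPos (k + 1)) T ∧ T.card = k := by
  rcases eq_or_ne k 0 with rfl | hk
  · exact ⟨∅, isDoublePointSet_deltaFunPos_one, rfl⟩
  have hone : (1 : ℝ) ≤ k := Nat.one_le_cast.2 (Nat.one_le_iff_ne_zero.2 hk)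
  obtain ⟨d, hd⟩ := exists_isLoopAngle (m := (k + 1 : ℕ)) (by push_cast; linarith)
  have hradius : (loopRadius (k + 1 : ℕ) d : ℂ) ≠ 0 :=
    Complex.ofReal_ne_zero.2 (hd.loopRadius_ne_zero (by push_cast; linarith))
  refine ⟨_, hd.isDoublePointSet_deltaFunPos hk, ?_⟩
  rw [Finset.card_image_of_injective _ (mul_right_injective₀ hradius),
    card_nthRootsFinset_of_ne_zero hk (neg_ne_zero.2 one_ne_zero)]

theorem HasRotationNumber.of_deriv_eq_mul {f u v : ℝ → ℂ} {φ : ℝ → ℝ} {ω : ℤ} (hφ : Continuous φ)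
    (hangle : ∀ t, IsAngle (u t) (φ t)) (hturn : φ 1 - φ 0 = 2 * π * ω) (hv : Continuous v)
    (hslit : ∀ t, v t ∈ Complex.slitPlane) (hclosed : v 1 = v 0)
    (hderiv : ∀ t, deriv f t = u t * v t) : HasRotationNumber f ω := by
  refine ⟨fun t ↦ φ t + (v t).arg, hφ.add ?_, fun t ↦ ?_, by simp only [hclosed]; linarith⟩
  · exact continuous_iff_continuousAt.2 fun t ↦
      (Complex.continuousAt_arg (hslit t)).comp hv.continuousAt
  · rw [hderiv]
    exact (hangle t).mul (isAngle_arg (v t))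

theorem isAngle_I : IsAngle Complex.I (π / 2) := by
  simp [IsAngle, Complex.exp_pi_div_two_mul_I]

theorem hasRotationNumber_deltaFunPos (k : ℕ) :
    HasRotationNumber (PlanarCurve.deltaFunPos (k + 1)) (k + 1 : ℕ) := by
  refine HasRotationNumber.of_deriv_eq_mul
    (u := fun t ↦ ((2 * π * (k + 1) : ℝ) : ℂ) * (Complex.I * unitCircle t ^ (k + 1)))
    (v := fun t ↦ 1 + 2 / 3 * conj (unitCircle t ^ k))
    (φ := fun t ↦ 0 + (π / 2 + 2 * π * (k + 1 : ℕ) * t)) (by fun_prop) (fun t ↦ ?_) ?_ ?_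
    (fun t ↦ ?_) ?_ fun t ↦ ?_
  · rw [unitCircle_pow]
    exact (isAngle_ofReal_of_nonneg (by positivity)).mul (isAngle_I.mul (isAngle_exp _))
  · push_cast
    ring
  · simp only [unitCircle]
    fun_prop
  · apply Complex.mem_slitPlane_of_norm_lt_one
    rw [norm_mul, RCLike.norm_conj, norm_pow, norm_unitCircle]
    norm_num
  · have hclosed : unitCircle 1 = unitCircle 0 := by simp [unitCircle]
    rw [hclosed]
  · have hunit : unitCircle t ^ k * conj (unitCircle t ^ k) = 1 := by
      rw [Complex.mul_conj, Complex.normSq_eq_norm_sq, norm_pow, norm_unitCircle]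
      simp
    rw [(hasDerivAt_deltaFunPos k t).deriv]
    push_cast
    linear_combination (-(2 * π * (k + 1) * Complex.I) * (2 / 3) * unitCircle t) * hunit

/-! ### The figure eight `δ_0` -/

theorem deltaFun_zero_apply (t : ℝ) : PlanarCurve.deltaFun 0 t =
    ⟨Real.sin (2 * π * t), 2 * Real.sin (2 * π * t) * Real.cos (2 * π * t)⟩ := by
  rw [PlanarCurve.deltaFun, if_pos rfl, Complex.mk_eq_add_mul_I, ← Real.sin_two_mul]
  ring_nf

theorem deriv_deltaFun_zero (t : ℝ) : deriv (PlanarCurve.deltaFun 0) t =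
    ⟨2 * π * Real.cos (2 * π * t), 4 * π * Real.cos (4 * π * t)⟩ := by
  have hlin : ∀ c : ℝ, HasDerivAt (fun t ↦ c * t) c t := fun c ↦ hasDerivAt_const_mul c
  rw [PlanarCurve.deltaFun, if_pos rfl, Complex.mk_eq_add_mul_I]
  refine (((hlin (2 * π)).sin.ofReal_comp.add
    ((hlin (4 * π)).sin.ofReal_comp.mul_const Complex.I)).congr_deriv ?_).deriv
  push_cast
  ring

theorem eq_zero_or_eq_half_of_sin_eq_zero {t : ℝ} (ht : t ∈ Ico (0 : ℝ) 1)
    (h : Real.sin (2 * π * t) = 0) : t = 0 ∨ t = 1 / 2 := by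
  obtain ⟨n, hn⟩ := Real.sin_eq_zero_iff.1 h
  have hnt : (n : ℝ) = 2 * t := mul_right_cancel₀ Real.pi_ne_zero (by linarith)
  have hlt : n < 2 := by exact_mod_cast (by linarith [ht.2] : (n : ℝ) < 2)
  have hnonneg : 0 ≤ n := by exact_mod_cast (by linarith [ht.1] : (0 : ℝ) ≤ n)
  obtain rfl | rfl : n = 0 ∨ n = 1 := by lia
  · left; push_cast at hnt; linarith
  · right; push_cast at hnt; linarith

theorem deltaFun_zero_half : PlanarCurve.deltaFun 0 (1 / 2) = 0 := by
  rw [deltaFun_zero_apply, show 2 * π * (1 / 2) = π by ring, Real.sin_pi]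
  simp [Complex.ext_iff]

theorem deltaFun_zero_zero : PlanarCurve.deltaFun 0 0 = 0 := by
  simp [deltaFun_zero_apply, Complex.ext_iff]

theorem fiber_deltaFun_zero : {t ∈ Ico (0 : ℝ) 1 | PlanarCurve.deltaFun 0 t = 0} = {0, 1 / 2} := by
  ext t
  constructor
  · rintro ⟨ht, hzero⟩
    rw [deltaFun_zero_apply] at hzero
    exact eq_zero_or_eq_half_of_sin_eq_zero ht (congrArg Complex.re hzero)
  · rintro (rfl | rfl)
    · exact ⟨by norm_num, deltaFun_zero_zero⟩
    · exact ⟨by norm_num, deltaFun_zero_half⟩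

theorem isDoublePointSet_deltaFun_zero : IsDoublePointSet (PlanarCurve.deltaFun 0) {0} where
  mem_of_apply_eq s hs t ht hst heq := by
    rw [deltaFun_zero_apply, deltaFun_zero_apply] at heq
    obtain ⟨hsin, hprod⟩ := Complex.mk.inj heq
    have hsin_zero : Real.sin (2 * π * s) = 0 := by
      by_contra hne
      rw [← hsin] at hprod
      have hcos := mul_left_cancel₀ (mul_ne_zero two_ne_zero hne) hprod
      refine hst (injOn_unitCircle hs ht ?_)
      rw [unitCircle, unitCircle, Complex.exp_ofReal_mul_I, Complex.exp_ofReal_mul_I, hsin, hcos]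
    rw [Finset.mem_singleton, deltaFun_zero_apply, hsin_zero]
    simp [Complex.ext_iff]
  exists_fiber_eq_pair p hp := by
    rw [Finset.mem_singleton.1 hp]
    refine ⟨0, 1 / 2, by norm_num, fiber_deltaFun_zero, ?_⟩
    rw [deriv_deltaFun_zero, deriv_deltaFun_zero, det2, show 2 * π * (1 / 2) = π by ring,
      show 4 * π * (1 / 2) = 2 * π by ring]
    have hpi := Real.pi_pos
    simp only [mul_zero, Real.cos_zero, Real.cos_pi, Real.cos_two_pi]
    nlinarith

theorem hasRotationNumber_deltaFun_zero : HasRotationNumber (PlanarCurve.deltaFun 0) 0 := by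
  refine HasRotationNumber.of_deriv_eq_mul (u := fun _ ↦ conj Complex.I)
    (v := fun t ↦ Complex.I * deriv (PlanarCurve.deltaFun 0) t)
    (φ := fun _ ↦ -(π / 2)) continuous_const (fun _ ↦ isAngle_I.map_conj) (by simp) ?_
    (fun t ↦ ?_) ?_ fun t ↦ ?_
  · simp only [deriv_deltaFun_zero, Complex.mk_eq_add_mul_I]
    fun_prop
  · rw [deriv_deltaFun_zero, Complex.mem_slitPlane_iff, show 4 * π * t = 2 * (2 * π * t) by ring,
      Real.cos_two_mul]
    by_cases hcos : Real.cos (2 * π * t) = 0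
    · left
      simp [hcos, Real.pi_pos]
    · right
      simp [hcos, Real.pi_ne_zero]
  · rw [deriv_deltaFun_zero, deriv_deltaFun_zero, mul_one, mul_one,
      show 4 * π = 2 * π + 2 * π by ring, Real.cos_add_two_pi]
    simp
  · rw [Complex.conj_I]
    linear_combination deriv (PlanarCurve.deltaFun 0) t * Complex.I_mul_I

/-! ### All the curves `δ_ω` -/

open PlanarCurve

theorem deltaFun_natCast_succ (k : ℕ) : deltaFun (k + 1 : ℕ) = deltaFunPos (k + 1) := by
  rw [deltaFun, if_neg (by lia), if_pos (by lia), Int.toNat_natCast]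

theorem deltaFun_neg_natCast_succ (k : ℕ) :
    deltaFun (-(k + 1 : ℕ)) = Complex.conjCLE ∘ deltaFunPos (k + 1) := by
  rw [deltaFun, if_neg (by lia), if_neg (by lia), neg_neg, Int.toNat_natCast]
  rfl

theorem natAbs_abs_natCast_succ_sub_one (k : ℕ) : (|((k + 1 : ℕ) : ℤ)| - 1).natAbs = k := by
  rw [Nat.abs_cast]
  lia

theorem differentiable_deltaFunPos (k : ℕ) : Differentiable ℝ (deltaFunPos (k + 1)) :=
  fun t ↦ (hasDerivAt_deltaFunPos k t).differentiableAt

theorem eq_natCast_succ_or_eq_neg_or_eq_zero (ω : ℤ) :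
    (∃ k : ℕ, ω = (k + 1 : ℕ) ∨ ω = -(k + 1 : ℕ)) ∨ ω = 0 := by
  rcases eq_or_ne ω 0 with hω | hω
  · exact .inr hω
  · exact .inl ⟨ω.natAbs - 1, by lia⟩

theorem stableF_deltaFun (ω : ℤ) : StableF (deltaFun ω) := by
  obtain ⟨k, rfl | rfl⟩ | rfl := eq_natCast_succ_or_eq_neg_or_eq_zero ω
  · obtain ⟨T, hT, -⟩ := exists_isDoublePointSet_deltaFunPos k
    exact deltaFun_natCast_succ k ▸ hT.stableF
  · obtain ⟨T, hT, -⟩ := exists_isDoublePointSet_deltaFunPos k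
    exact deltaFun_neg_natCast_succ k ▸ hT.stableF.comp (differentiable_deltaFunPos k) _
  · exact isDoublePointSet_deltaFun_zero.stableF

theorem ncard_crossingSetF_deltaFun (ω : ℤ) :
    (crossingSetF (deltaFun ω)).ncard = (|ω| - 1).natAbs := by
  obtain ⟨k, rfl | rfl⟩ | rfl := eq_natCast_succ_or_eq_neg_or_eq_zero ω
  · obtain ⟨T, hT, hcard⟩ := exists_isDoublePointSet_deltaFunPos k
    rw [deltaFun_natCast_succ, hT.ncard_crossingSetF, hcard, natAbs_abs_natCast_succ_sub_one]
  · obtain ⟨T, hT, hcard⟩ := exists_isDoublePointSet_deltaFunPos k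
    have hconj := crossingSetF_comp Complex.conjCLE.toEquiv (deltaFunPos (k + 1))
    rw [deltaFun_neg_natCast_succ]
    refine (congrArg ncard hconj).trans ?_
    rw [ncard_image_of_injective _ Complex.conjCLE.toEquiv.injective, hT.ncard_crossingSetF, hcard,
      abs_neg, natAbs_abs_natCast_succ_sub_one]
  · rw [isDoublePointSet_deltaFun_zero.ncard_crossingSetF]
    rfl

theorem hasRotationNumber_deltaFun (ω : ℤ) : HasRotationNumber (deltaFun ω) ω := by
  obtain ⟨k, rfl | rfl⟩ | rfl := eq_natCast_succ_or_eq_neg_or_eq_zero ω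
  · exact deltaFun_natCast_succ k ▸ hasRotationNumber_deltaFunPos k
  · exact deltaFun_neg_natCast_succ k ▸
      (hasRotationNumber_deltaFunPos k).conj_comp (differentiable_deltaFunPos k)
  · exact hasRotationNumber_deltaFun_zero

/-- first part of the Corollary. For every integer `ω`, the standard
curve `δ_ω` has the minimal number of crossings among all stable planar curves with
Whitney winding number `ω`, and this minimal number equals `||ω| - 1|`. -/
theorem statement11 (ω : ℤ) (δ : PlanarCurve) (hδ : δ.toFun = PlanarCurve.deltaFun ω) :
    δ.Stable ∧ δ.HasWhitney ω ∧ δ.crossings = (|ω| - 1).natAbs ∧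
    ∀ c : PlanarCurve, c.Stable → c.HasWhitney ω → δ.crossings ≤ c.crossings := by
  have hcard : δ.crossings = (|ω| - 1).natAbs := by
    rw [crossings, hδ, ncard_crossingSetF_deltaFun]
  refine ⟨?_, ?_, hcard, fun c hst hω ↦ ?_⟩
  · rw [Stable, hδ]
    exact stableF_deltaFun ω
  · change HasRotationNumber δ.toFun ω
    rw [hδ]
    exact hasRotationNumber_deltaFun ω
  · rw [hcard]
    exact hst.natAbs_abs_sub_one_le_crossings hω

end CurvePaper
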